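/- arXiv:1610.03712 — 5 statements merged into one kernel-verified Lean document; each statement's English description precedes it below -/
import Mathlib

section
/- Let F be an algebraically closed field and let A ∈ GL(3,F) be such that the centralizer of A in GL(3,F) is not a solvable group. Then A is diagonalizable and has a repeated eigenvalue; that is, there exist S ∈ GL(3,F) and nonzero scalars among which at least two coincide such that S·A·S⁻¹ is a diagonal matrix whose diagonal entries are not pairwise distinct. -/
open scoped MatrixGroups

/-!
If the minimal polynomial of `A` has degree `3`, then `F³` has a cyclic vector for `A`, so any two
matrices commuting with `A` commute with each other and the centralizer is abelian. Otherwise the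
degree is at most `2`, and the minimal polynomial splits: it cannot be irreducible of degree `2`,
as the degree would then divide `3`. If it is `(X - a) ^ 2`, then `N = A - a` satisfies
`N ≠ 0 = N ^ 2`, and the centralizer preserves the complete flag `0 ⊂ range N ⊂ ker N ⊂ F³`, hence
is solvable. In the remaining case the roots are distinct, so `A` has an eigenbasis, and its three
eigenvalues are among the at most two roots.
-/

open Module Polynomial
open scoped commutatorElement

section Flag

variable {G R V : Type*} [Group G]

theorem commutator_le_ker_of_commute {M : Type*} [Monoid M] {φ : G →* M} {H : Subgroup G}
    (h : ∀ x ∈ H, ∀ y ∈ H, Commute (φ x) (φ y)) : ⁅H, H⁆ ≤ φ.ker := by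
  rw [Subgroup.commutator_le]
  intro x hx y hy
  have map_eq_one : ⁅φ.toHomUnits x, φ.toHomUnits y⁆ = 1 :=
    commutatorElement_eq_one_iff_mul_comm.mpr (Units.ext (h x hx y hy))
  rw [← map_commutatorElement] at map_eq_one
  exact congrArg Units.val map_eq_one

theorem apply_sub_mem_of_mem_commutator [Ring R] [AddCommGroup V] [Module R V]
    {ρ : Representation R G V} {H : Subgroup G} {W W' : Submodule R V}
    (hW : ∀ g, W ≤ W.comap (ρ g)) (hW' : ∀ g, W' ≤ W'.comap (ρ g))
    (h : ∀ x ∈ H, ∀ y ∈ H, ∀ v ∈ W', ρ x (ρ y v) - ρ y (ρ x v) ∈ W) :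
    ∀ g ∈ ⁅H, H⁆, ∀ v ∈ W', ρ g v - v ∈ W := by
  let σ := (ρ.subrepresentation W' hW').quotient (W.comap W'.subtype) fun g _ hv ↦ hW g hv
  have le_ker : ⁅H, H⁆ ≤ MonoidHom.ker σ := commutator_le_ker_of_commute fun x hx y hy ↦
    Submodule.linearMap_qext _ <| LinearMap.ext fun v ↦
      (Submodule.Quotient.eq _).mpr (h x hx y hy v v.2)
  intro g hg v hv
  exact (Submodule.Quotient.eq (W.comap W'.subtype)).mp
    congr($(le_ker hg) ((W.comap W'.subtype).mkQ ⟨v, hv⟩))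

variable [CommRing R] [AddCommGroup V] [Module R V]

theorem apply_apply_sub_mem_of_eq_sup_span_singleton {f g : End R V} {W W' : Submodule R V} {w : V}
    (hw : W' = W ⊔ R ∙ w) (hfW : W ≤ W.comap f) (hgW : W ≤ W.comap g)
    (hfW' : W' ≤ W'.comap f) (hgW' : W' ≤ W'.comap g) {v : V} (hv : v ∈ W') :
    f (g v) - g (f v) ∈ W := by
  have mem_iff (v : V) : v ∈ W' ↔ ∃ u ∈ W, ∃ c : R, u + c • w = v := by
    simp [hw, Submodule.mem_sup, Submodule.mem_span_singleton]
  have hwW' : w ∈ W' := (mem_iff w).mpr ⟨0, W.zero_mem, 1, by simp⟩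
  obtain ⟨u, hu, c, rfl⟩ := (mem_iff v).mp hv
  obtain ⟨x, hx, a, hfw⟩ := (mem_iff _).mp (hfW' hwW')
  obtain ⟨y, hy, b, hgw⟩ := (mem_iff _).mp (hgW' hwW')
  have expand : f (g (u + c • w)) - g (f (u + c • w)) =
      (f (g u) - g (f u)) + c • (f y + b • x - (g x + a • y)) := by
    simp only [map_add, map_smul, ← hfw, ← hgw]
    module
  rw [expand]
  exact W.add_mem (W.sub_mem (hfW (hgW hu)) (hgW (hfW hu))) <| W.smul_mem c <|
    W.sub_mem (W.add_mem (hfW hy) (W.smul_mem b hx)) (W.add_mem (hgW hx) (W.smul_mem a hy))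

theorem apply_eq_of_mem_derivedSeries_of_flag {ρ : Representation R G V} {W : ℕ → Submodule R V}
    (hzero : W 0 = ⊥) (hsucc : ∀ i, ∃ w, W (i + 1) = W i ⊔ R ∙ w)
    (hW : ∀ i g, W i ≤ (W i).comap (ρ g)) (n : ℕ) :
    ∀ g ∈ derivedSeries G n, ∀ v ∈ W n, ρ g v = v := by
  have apply_sub_mem (i : ℕ) : ∀ g ∈ derivedSeries G 1, ∀ v ∈ W (i + 1), ρ g v - v ∈ W i := by
    obtain ⟨w, hw⟩ := hsucc i
    exact apply_sub_mem_of_mem_commutator (hW i) (hW (i + 1)) fun x _ y _ v hv ↦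
      apply_apply_sub_mem_of_eq_sup_span_singleton hw (hW i x) (hW i y)
        (hW (i + 1) x) (hW (i + 1) y) hv
  cases n with
  | zero => simp [hzero]
  | succ n =>
    induction n with
    | zero => exact fun g hg v hv ↦ by simpa [hzero, sub_eq_zero] using apply_sub_mem 0 g hg v hv
    | succ n ih =>
      -- On `W (n + 2)`, `y - 1` maps into `W (n + 1)`, where `x` is trivial, so `x y = x + y - 1`.
      have commute_on {x y} (hx : x ∈ derivedSeries G (n + 1)) (hy : y ∈ derivedSeries G (n + 1))
          {v} (hv : v ∈ W (n + 2)) : ρ x (ρ y v) - ρ y (ρ x v) = 0 := by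
        have one_le : derivedSeries G (n + 1) ≤ derivedSeries G 1 :=
          derivedSeries_antitone G (Nat.le_add_left 1 n)
        have hxy := ih x hx _ (apply_sub_mem (n + 1) y (one_le hy) v hv)
        have hyx := ih y hy _ (apply_sub_mem (n + 1) x (one_le hx) v hv)
        rw [map_sub, sub_eq_iff_eq_add] at hxy hyx
        rw [hxy, hyx]
        abel
      intro g hg v hv
      refine sub_eq_zero.mp <| (Submodule.mem_bot R).mp <| apply_sub_mem_of_mem_commutator
        (W := ⊥) (by simp) (hW (n + 2)) (fun x hx y hy v hv ↦ ?_) g hg v hv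
      exact (Submodule.mem_bot R).mpr (commute_on hx hy hv)

theorem isSolvable_of_flag {ρ : Representation R G V} (hρ : Function.Injective ρ)
    {W : ℕ → Submodule R V} (hzero : W 0 = ⊥) (hsucc : ∀ i, ∃ w, W (i + 1) = W i ⊔ R ∙ w)
    (hW : ∀ i g, W i ≤ (W i).comap (ρ g)) {n : ℕ} (hn : W n = ⊤) : Group.IsSolvable G := by
  refine ⟨n, (Subgroup.eq_bot_iff_forall _).mpr fun g hg ↦ hρ ?_⟩
  rw [map_one]
  ext v
  exact apply_eq_of_mem_derivedSeries_of_flag hzero hsucc hW n g hg v (hn ▸ Submodule.mem_top)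

end Flag

theorem exists_eq_sup_span_singleton {K V : Type*} [DivisionRing K] [AddCommGroup V] [Module K V]
    {W W' : Submodule K V} [FiniteDimensional K W'] (hle : W ≤ W')
    (h : finrank K W' ≤ finrank K W + 1) : ∃ w, W' = W ⊔ K ∙ w := by
  rcases hle.eq_or_lt with rfl | hlt
  · exact ⟨0, by simp⟩
  · obtain ⟨w, hwW', hwW⟩ := SetLike.exists_of_lt hlt
    have span_le : W ⊔ K ∙ w ≤ W' := sup_le hle (by simpa using hwW')
    have := Submodule.finiteDimensional_of_le span_le
    refine ⟨w, (Submodule.eq_of_le_of_finrank_le span_le (h.trans ?_)).symm⟩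
    refine Submodule.finrank_lt_finrank_of_lt (le_sup_left.lt_of_not_ge ?_)
    simpa using hwW

theorem commute_of_commute_of_cyclic {R M : Type*} [CommSemiring R] [AddCommMonoid M] [Module R M]
    {f g h : End R M} {v : M} (hv : ∀ w, ∃ p : R[X], aeval f p v = w)
    (hg : Commute g f) (hh : Commute h f) : Commute g h := by
  have commute_aeval {e : End R M} (he : Commute e f) (p : R[X]) : Commute e (aeval f p) :=
    Algebra.commute_of_mem_adjoin_singleton_of_commute (aeval_mem_adjoin_singleton R f) he
  obtain ⟨p, hp⟩ := hv (g v)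
  have g_eq : g = aeval f p := by
    ext w
    obtain ⟨q, rfl⟩ := hv w
    calc g (aeval f q v) = aeval f q (g v) := congr($(commute_aeval hg q) v)
      _ = aeval f q (aeval f p v) := by rw [hp]
      _ = aeval f p (aeval f q v) := congr($((Commute.all q p).map (aeval f)) v)
  exact g_eq ▸ (commute_aeval hh p).symm

theorem exists_eq_X_sub_C_sq_of_not_nodup_roots {K : Type*} [Field K] {p : K[X]} (hp : p.Monic)
    (hs : p.Splits) (hdeg : p.natDegree ≤ 2) (hroots : ¬ p.roots.Nodup) :
    ∃ a, p = (X - C a) ^ 2 := by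
  obtain ⟨a, t, ht⟩ : ∃ a t, p.roots = a ::ₘ a ::ₘ t := by
    simpa [Multiset.nodup_iff_ne_cons_cons] using hroots
  have t_eq : t = 0 := by simpa [hs.natDegree_eq_card_roots, ht] using hdeg
  exact ⟨a, by rw [hs.eq_prod_roots_of_monic hp, ht, t_eq]; simp [sq]⟩

section Endomorphism

variable {G K V : Type*} [Group G] [Field K] [AddCommGroup V] [Module K V] {f : End K V}
  {ρ : Representation K G V}

theorem natDegree_dvd_finrank_of_irreducible_of_aeval_eq_zero {p : K[X]} (hp : Irreducible p)
    (hf : aeval f p = 0) : p.natDegree ∣ finrank K V := by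
  have := Fact.mk hp
  have torsion : IsTorsionBySet K[X] (AEval' f) (Ideal.span {p} : Ideal K[X]) := by
    rw [← isTorsionBySet_iff_is_torsion_by_span, isTorsionBySet_singleton_iff]
    exact fun v ↦ congr($hf v)
  -- `V` is a vector space over the field `K[X] / (p)`.
  let : Module (AdjoinRoot p) (AEval' f) := torsion.module
  have : IsScalarTower K (AdjoinRoot p) (AEval' f) := torsion.isScalarTower
  rw [(AEval'.of f).finrank_eq, ← finrank_mul_finrank K (AdjoinRoot p),
    (AdjoinRoot.powerBasis hp.ne_zero).finrank]
  exact dvd_mul_right _ _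

theorem splits_minpoly_of_odd_finrank (hV : Odd (finrank K V))
    (hdeg : (minpoly K f).natDegree ≤ 2) : (minpoly K f).Splits := by
  rcases hdeg.lt_or_eq with hlt | htwo
  · exact .of_natDegree_le_one (Nat.le_of_lt_succ hlt)
  · obtain ⟨a, ha⟩ : ∃ a, (minpoly K f).IsRoot a := by
      by_contra! hroot
      have irreducible : Irreducible (minpoly K f) :=
        irreducible_of_degree_le_three_of_not_isRoot (by simp [htwo]) hroot
      have two_dvd : 2 ∣ finrank K V := htwo ▸
        natDegree_dvd_finrank_of_irreducible_of_aeval_eq_zero irreducible (minpoly.aeval K f)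
      exact hV.not_two_dvd_nat two_dvd
    exact .of_natDegree_eq_two htwo ha

theorem ker_aeval_prod_X_sub_C_le_iSup_eigenspace (f : End K V) (s : Finset K) :
    (aeval f (∏ μ ∈ s, (X - C μ))).ker ≤ ⨆ μ, f.eigenspace μ := by
  classical
  induction s using Finset.induction_on with
  | empty => simp [End.one_eq_id]
  | insert μ s hμ ih =>
    have coprime : IsCoprime (X - C μ) (∏ ν ∈ s, (X - C ν)) := IsCoprime.prod_right fun ν hν ↦
      isCoprime_X_sub_C_of_isUnit_sub (sub_ne_zero.mpr (ne_of_mem_of_not_mem hν hμ).symm).isUnit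
    rw [Finset.prod_insert hμ, ← sup_ker_aeval_eq_ker_aeval_mul_of_coprime f coprime]
    refine sup_le (le_iSup_of_le μ ?_) ih
    simp [End.eigenspace_def, Algebra.algebraMap_eq_smul_one]

variable [FiniteDimensional K V]

theorem exists_aeval_apply_eq_zero_iff_minpoly_dvd (f : End K V) :
    ∃ v : V, ∀ p : K[X], aeval f p v = 0 ↔ minpoly K f ∣ p := by
  obtain ⟨x, hx⟩ := exists_ker_toSpanSingleton_eq_annihilator K[X] (AEval' f)
  refine ⟨(AEval'.of f).symm x, fun p ↦ ?_⟩
  rw [← Ideal.mem_span_singleton, span_minpoly_eq_annihilator, ← hx]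
  rfl

theorem exists_cyclic_vector_of_natDegree_minpoly (h : (minpoly K f).natDegree = finrank K V) :
    ∃ v : V, ∀ w, ∃ p : K[X], aeval f p v = w := by
  obtain ⟨v, hv⟩ := exists_aeval_apply_eq_zero_iff_minpoly_dvd f
  let φ : degreeLT K (minpoly K f).natDegree →ₗ[K] V :=
    (LinearMap.applyₗ v ∘ₗ (aeval f).toLinearMap).domRestrict _
  have φ_injective : Function.Injective φ := by
    refine (injective_iff_map_eq_zero φ).mpr fun ⟨p, hp⟩ hφ ↦ Subtype.ext ?_
    refine eq_zero_of_dvd_of_degree_lt ((hv p).mp hφ) ?_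
    rwa [degree_eq_natDegree (minpoly.ne_zero_of_finite K f), ← mem_degreeLT]
  have finrank_eq : finrank K (degreeLT K (minpoly K f).natDegree) = finrank K V := by
    rw [(degreeLTEquiv K _).finrank_eq, finrank_fin_fun, h]
  have : FiniteDimensional K (degreeLT K (minpoly K f).natDegree) :=
    Module.Finite.equiv (degreeLTEquiv K _).symm
  refine ⟨v, fun w ↦ ?_⟩
  obtain ⟨p, rfl⟩ :=
    (LinearMap.injective_iff_surjective_of_finrank_eq_finrank finrank_eq).mp φ_injective w
  exact ⟨p, rfl⟩

theorem iSup_eigenspace_eq_top_of_nodup_roots (hs : (minpoly K f).Splits)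
    (hroots : (minpoly K f).roots.Nodup) : ⨆ μ, f.eigenspace μ = ⊤ := by
  classical
  have prod_eq : ∏ μ ∈ (minpoly K f).roots.toFinset, (X - C μ) = minpoly K f := by
    rw [Finset.prod, Multiset.toFinset_val, hroots.dedup, ← hs.eq_prod_roots_of_monic]
    exact minpoly.monic (Algebra.IsIntegral.isIntegral f)
  simpa [prod_eq] using
    ker_aeval_prod_X_sub_C_le_iSup_eigenspace f (minpoly K f).roots.toFinset

theorem exists_eigenbasis_of_iSup_eigenspace_eq_top {ι : Type*} [Fintype ι]
    (h : ⨆ μ, f.eigenspace μ = ⊤) (hι : finrank K V = Fintype.card ι) :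
    ∃ (b : Basis ι K V) (d : ι → K), ∀ i, f.HasEigenvector (d i) (b i) := by
  classical
  let B := (DirectSum.isInternal_submodule_of_iSupIndep_of_iSup_eq_top
    f.eigenspaces_iSupIndep h).collectedBasis fun μ ↦ Free.chooseBasis K (f.eigenspace μ)
  have := FiniteDimensional.fintypeBasisIndex B
  let e := Fintype.equivOfCardEq ((finrank_eq_card_basis B).symm.trans hι)
  exact ⟨B.reindex e, fun i ↦ (e.symm i).1, fun i ↦ ⟨by simp [B], (B.reindex e).ne_zero i⟩⟩

theorem exists_ne_eigenvalue_eq {ι : Type*} [Fintype ι] {d : ι → K}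
    (hd : ∀ i, f.HasEigenvalue (d i)) (hdeg : (minpoly K f).natDegree < Fintype.card ι) :
    ∃ i j, i ≠ j ∧ d i = d j := by
  classical
  have card_lt : (minpoly K f).roots.toFinset.card < (Finset.univ : Finset ι).card :=
    ((Multiset.toFinset_card_le _).trans (card_roots' _)).trans_lt hdeg
  obtain ⟨i, -, j, -, hij, heq⟩ := Finset.exists_ne_map_eq_of_card_lt_of_maps_to card_lt
    (f := d) fun i _ ↦ by
      simpa [minpoly.ne_zero_of_finite K f] using End.isRoot_of_hasEigenvalue (hd i)
  exact ⟨i, j, hij, heq⟩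

theorem natDegree_minpoly_lt_finrank_of_not_isSolvable (hρ : Function.Injective ρ)
    (hcomm : ∀ g, Commute (ρ g) f) (hG : ¬ Group.IsSolvable G) :
    (minpoly K f).natDegree < finrank K V := by
  have natDegree_le : (minpoly K f).natDegree ≤ finrank K V := by
    rw [← f.charpoly_natDegree]
    exact natDegree_le_of_dvd f.minpoly_dvd_charpoly f.charpoly_monic.ne_zero
  refine natDegree_le.lt_of_ne fun h ↦ hG (Group.isSolvable_of_comm fun x y ↦ hρ ?_)
  obtain ⟨v, hv⟩ := exists_cyclic_vector_of_natDegree_minpoly h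
  rw [map_mul, map_mul, (commute_of_commute_of_cyclic hv (hcomm x) (hcomm y)).eq]

theorem isSolvable_of_commute_of_mul_self_eq_zero (hV : finrank K V ≤ 3) {N : End K V}
    (hN : N ≠ 0) (hNN : N * N = 0) (hρ : Function.Injective ρ) (hcomm : ∀ g, Commute (ρ g) N) :
    Group.IsSolvable G := by
  have range_le_ker : N.range ≤ N.ker := LinearMap.range_le_ker_iff.mpr hNN
  have rank_nullity := N.finrank_range_add_finrank_ker
  have one_le_rank : 1 ≤ finrank K N.range :=
    Submodule.one_le_finrank_iff.mpr (mt LinearMap.range_eq_bot.mp hN)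
  have rank_le_nullity := Submodule.finrank_mono range_le_ker
  let W : ℕ → Submodule K V
    | 0 => ⊥
    | 1 => N.range
    | 2 => N.ker
    | _ => ⊤
  refine isSolvable_of_flag hρ (W := W) (n := 3) rfl (fun i ↦ ?_) (fun i g ↦ ?_) rfl
  · match i with
    | 0 =>
      exact exists_eq_sup_span_singleton (W := ⊥) (W' := N.range) bot_le
        (by rw [finrank_bot]; omega)
    | 1 => exact exists_eq_sup_span_singleton (W := N.range) (W' := N.ker) range_le_ker (by omega)
    | 2 =>
      exact exists_eq_sup_span_singleton (W := N.ker) (W' := ⊤) le_top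
        (by rw [finrank_top]; omega)
    | _ + 3 => exact ⟨0, by simp [W]⟩
  · match i with
    | 0 => exact bot_le
    | 1 =>
      rintro _ ⟨v, rfl⟩
      exact ⟨ρ g v, congr($((hcomm g).symm) v)⟩
    | 2 =>
      intro v hv
      have apply_comm := congr($((hcomm g).symm) v)
      simpa [W, LinearMap.mem_ker.mp hv] using apply_comm
    | _ + 3 => exact le_top

theorem nodup_roots_minpoly_of_not_isSolvable (hV : finrank K V ≤ 3) (hs : (minpoly K f).Splits)
    (hdeg : (minpoly K f).natDegree ≤ 2) (hρ : Function.Injective ρ)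
    (hcomm : ∀ g, Commute (ρ g) f) (hG : ¬ Group.IsSolvable G) : (minpoly K f).roots.Nodup := by
  by_contra hroots
  obtain ⟨a, ha⟩ := exists_eq_X_sub_C_sq_of_not_nodup_roots
    (minpoly.monic (Algebra.IsIntegral.isIntegral f)) hs hdeg hroots
  have ne_zero : aeval f (X - C a) ≠ 0 := fun h ↦ by
    have sq_dvd : (X - C a) ^ 2 ∣ X - C a := ha ▸ minpoly.dvd K f h
    simpa using natDegree_le_of_dvd sq_dvd (X_sub_C_ne_zero a)
  have mul_self : aeval f (X - C a) * aeval f (X - C a) = 0 := by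
    rw [← map_mul, ← sq, ← ha, minpoly.aeval]
  exact hG <| isSolvable_of_commute_of_mul_self_eq_zero hV ne_zero mul_self hρ fun g ↦
    Algebra.commute_of_mem_adjoin_singleton_of_commute (aeval_mem_adjoin_singleton K f) (hcomm g)

theorem exists_eigenbasis_of_not_isSolvable {ι : Type*} [Fintype ι] (hι : Fintype.card ι = 3)
    (hV : finrank K V = 3) (hρ : Function.Injective ρ) (hcomm : ∀ g, Commute (ρ g) f)
    (hG : ¬ Group.IsSolvable G) :
    ∃ (b : Basis ι K V) (d : ι → K),
      (∀ i, f.HasEigenvector (d i) (b i)) ∧ ∃ i j, i ≠ j ∧ d i = d j := by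
  have natDegree_lt : (minpoly K f).natDegree < 3 :=
    hV ▸ natDegree_minpoly_lt_finrank_of_not_isSolvable hρ hcomm hG
  have natDegree_le : (minpoly K f).natDegree ≤ 2 := Nat.le_of_lt_succ natDegree_lt
  have splits : (minpoly K f).Splits := splits_minpoly_of_odd_finrank (hV ▸ by decide) natDegree_le
  have nodup : (minpoly K f).roots.Nodup :=
    nodup_roots_minpoly_of_not_isSolvable hV.le splits natDegree_le hρ hcomm hG
  obtain ⟨b, d, hb⟩ := exists_eigenbasis_of_iSup_eigenspace_eq_top
    (iSup_eigenspace_eq_top_of_nodup_roots splits nodup) (hV.trans hι.symm)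
  exact ⟨b, d, hb, exists_ne_eigenvalue_eq
    (fun i ↦ End.hasEigenvalue_of_hasEigenvector (hb i)) (hι ▸ natDegree_lt)⟩

end Endomorphism

theorem exists_GL_conj_eq_diagonal_of_basis_hasEigenvector {n R : Type*} [Fintype n]
    [DecidableEq n] [CommRing R] {M : Matrix n n R} (b : Basis n R (n → R)) {d : n → R}
    (hb : ∀ i, End.HasEigenvector (Matrix.toLin' M) (d i) (b i)) :
    ∃ S : GL n R, (S : Matrix n n R) * M * (S⁻¹ : GL n R) = Matrix.diagonal d := by
  let e := Pi.basisFun R n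
  let S : GL n R := ⟨b.toMatrix e, e.toMatrix b, b.toMatrix_mul_toMatrix_flip e,
    e.toMatrix_mul_toMatrix_flip b⟩
  refine ⟨S, ?_⟩
  calc b.toMatrix e * M * e.toMatrix b
      = b.toMatrix e * LinearMap.toMatrix e e (Matrix.toLin' M) * e.toMatrix b := by
        rw [LinearMap.toMatrix_eq_toMatrix', LinearMap.toMatrix'_toLin']
    _ = LinearMap.toMatrix b b (Matrix.toLin' M) :=
        basis_toMatrix_mul_linearMap_toMatrix_mul_basis_toMatrix ..
    _ = Matrix.diagonal d := by
        ext i j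
        rw [LinearMap.toMatrix_apply, (hb j).apply_eq_smul]
        simp +contextual [Matrix.diagonal_apply, Finsupp.single_apply, eq_comm]

theorem centralizer_not_solvable_diagonalizable_repeated_eigenvalue_general
    (F : Type*) [Field F] (A : GL (Fin 3) F)
    (h : ¬ Group.IsSolvable ↥(Subgroup.centralizer ({A} : Set (GL (Fin 3) F)))) :
    ∃ (S : GL (Fin 3) F) (d : Fin 3 → F),
      (∀ i, d i ≠ 0) ∧ (∃ i j : Fin 3, i ≠ j ∧ d i = d j) ∧
      ((S * A * S⁻¹ : GL (Fin 3) F) : Matrix (Fin 3) (Fin 3) F) = Matrix.diagonal d := by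
  let toEnd : GL (Fin 3) F →* End F (Fin 3 → F) :=
    (Matrix.toLinAlgEquiv' : _ ≃ₐ[F] _).toMonoidHom.comp (Units.coeHom _)
  have toEnd_injective : Function.Injective toEnd :=
    Matrix.toLinAlgEquiv'.injective.comp Units.val_injective
  let ρ : Representation F (Subgroup.centralizer {A}) (Fin 3 → F) :=
    toEnd.comp (Subgroup.subtype _)
  have ρ_injective : Function.Injective ρ := toEnd_injective.comp (Subgroup.subtype_injective _)
  have commute_ρ (g) : Commute (ρ g) (toEnd A) :=
    Commute.map (Subgroup.mem_centralizer_singleton_iff.mp g.2) toEnd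
  obtain ⟨b, d, hb, hrepeat⟩ := exists_eigenbasis_of_not_isSolvable (Fintype.card_fin 3)
    (finrank_fin_fun F) ρ_injective commute_ρ h
  obtain ⟨S, hS⟩ := exists_GL_conj_eq_diagonal_of_basis_hasEigenvector b hb
  have isUnit_diagonal : IsUnit (Matrix.diagonal d) := hS ▸ (S * A * S⁻¹).isUnit
  rw [Matrix.isUnit_diagonal, Pi.isUnit_iff] at isUnit_diagonal
  exact ⟨S, d, fun i ↦ (isUnit_diagonal i).ne_zero, hrepeat, hS⟩

/-- If `F` is algebraically closed and the centralizer of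
`A ∈ GL(3,F)` in `GL(3,F)` is not solvable, then `A` is diagonalizable with a
repeated eigenvalue: some conjugate of `A` is a diagonal matrix with nonzero,
not pairwise distinct diagonal entries. -/
theorem centralizer_not_solvable_diagonalizable_repeated_eigenvalue
    (F : Type*) [Field F] [IsAlgClosed F] (A : GL (Fin 3) F)
    (h : ¬ IsSolvable ↥(Subgroup.centralizer ({A} : Set (GL (Fin 3) F)))) :
    ∃ (S : GL (Fin 3) F) (d : Fin 3 → F),
      (∀ i, d i ≠ 0) ∧ (∃ i j : Fin 3, i ≠ j ∧ d i = d j) ∧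
      ((S * A * S⁻¹ : GL (Fin 3) F) : Matrix (Fin 3) (Fin 3) F) = Matrix.diagonal d :=
  centralizer_not_solvable_diagonalizable_repeated_eigenvalue_general F A h
end

section
/- Let G be a group containing elements A, B, C, D such that A commutes with B, B commutes with C, C commutes with D, and D commutes with A. Suppose that the subgroup of G generated by A and C is not solvable and the subgroup of G generated by B and D is not solvable. Then for every field F there is no injective group homomorphism from G into GL(3,F). -/
open scoped MatrixGroups

/-!
If `H` and `K` are commuting subgroups of `GL(3, F)`, then one of them is solvable; apply this to
`⟨A, C⟩` and `⟨B, D⟩`. To see it, enlarge `F` to be algebraically closed and put `V = F³`. If `K`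
is not a group of scalars, then the kernel or the image of some `k - c` is an `H`-invariant plane
`W`. If every element of `K` is scalar on `W`, then `K` preserves `0 ≤ W ≤ V` and acts by scalars on
`W` and `V / W`. Otherwise some `k` is not scalar on `W`, and either an eigenspace of `k` in `W` or,
when `k` does not preserve `W`, the intersection `W ∩ k⁻¹ W` is an `H`-invariant line `L`, so that
`H` preserves the complete flag `0 ≤ L ≤ W ≤ V`. A group acting faithfully, and by scalars on the
steps of an invariant flag, is solvable.
-/

theorem commute_of_mem_closure {G : Type*} [Group G] {S T : Set G}
    (h : ∀ x ∈ S, ∀ y ∈ T, Commute x y) {x y : G}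
    (hx : x ∈ Subgroup.closure S) (hy : y ∈ Subgroup.closure T) : Commute x y := by
  have hS : Subgroup.closure S ≤ Subgroup.centralizer (Subgroup.closure T : Set G) := by
    rw [Subgroup.centralizer_closure, Subgroup.closure_le]
    exact fun s hs ↦ Subgroup.mem_centralizer_iff.2 fun t ht ↦ (h s hs t ht).symm.eq
  exact (Subgroup.mem_centralizer_iff.1 (hS hx) y hy).symm

section ScalarModulo

/-- The endomorphism `f` acts on the subquotient `U / U'` as multiplication by a scalar. Neither
`U' ≤ U` nor the invariance of `U` and `U'` under `f` is part of the definition. -/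
def IsScalarModulo {R M : Type*} [CommRing R] [AddCommGroup M] [Module R M]
    (f : Module.End R M) (U U' : Submodule R M) : Prop :=
  ∃ a : R, ∀ u ∈ U, f u - a • u ∈ U'

namespace IsScalarModulo

variable {R M : Type*} [CommRing R] [AddCommGroup M] [Module R M]
  {f g : Module.End R M} {U U' : Submodule R M}

theorem mem_invtSubmodule (h : IsScalarModulo f U U') (hU : U' ≤ U) : U ∈ f.invtSubmodule := by
  obtain ⟨a, ha⟩ := h
  intro u hu
  simpa using U.add_mem (hU (ha u hu)) (U.smul_mem a hu)

theorem apply_apply_sub_mem (hf : IsScalarModulo f U U') (hg : IsScalarModulo g U U')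
    (hfU' : U' ∈ f.invtSubmodule) (hgU' : U' ∈ g.invtSubmodule) {u : M} (hu : u ∈ U) :
    f (g u) - g (f u) ∈ U' := by
  obtain ⟨a, ha⟩ := hf
  obtain ⟨b, hb⟩ := hg
  have hswap : f (g u) - g (f u) =
      f (g u - b • u) - g (f u - a • u) + (b • (f u - a • u) - a • (g u - b • u)) := by
    simp only [map_sub, map_smul, smul_sub, smul_comm a b]
    abel
  rw [hswap]
  exact U'.add_mem (U'.sub_mem (hfU' (hb u hu)) (hgU' (ha u hu)))
    (U'.sub_mem (U'.smul_mem b (ha u hu)) (U'.smul_mem a (hb u hu)))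

end IsScalarModulo

variable {F V : Type*} [Field F] [AddCommGroup V] [Module F V] [FiniteDimensional F V]

theorem exists_sub_smul_mem_of_finrank_le {U U' : Submodule F V} (hU : U' ≤ U)
    (h : Module.finrank F U ≤ Module.finrank F U' + 1) :
    ∃ v ∈ U, ∀ u ∈ U, ∃ c : F, u - c • v ∈ U' := by
  have hquot : Module.finrank F (U ⧸ U'.submoduleOf U) ≤ 1 := by
    have := (U'.submoduleOf U).finrank_quotient_add_finrank
    rw [(Submodule.submoduleOfEquivOfLe hU).finrank_eq] at this
    omega
  obtain ⟨q, hq⟩ := finrank_le_one_iff.1 hquot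
  obtain ⟨v, rfl⟩ := Submodule.mkQ_surjective _ q
  refine ⟨v, v.2, fun u hu ↦ ?_⟩
  obtain ⟨c, hc⟩ := hq (Submodule.mkQ _ ⟨u, hu⟩)
  rw [← map_smul, Submodule.mkQ_apply, Submodule.mkQ_apply, eq_comm, Submodule.Quotient.eq] at hc
  exact ⟨c, hc⟩

theorem isScalarModulo_of_finrank_le {f : Module.End F V} {U U' : Submodule F V} (hU : U' ≤ U)
    (hfU : U ∈ f.invtSubmodule) (hfU' : U' ∈ f.invtSubmodule)
    (h : Module.finrank F U ≤ Module.finrank F U' + 1) : IsScalarModulo f U U' := by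
  obtain ⟨v, hv, hspan⟩ := exists_sub_smul_mem_of_finrank_le hU h
  obtain ⟨a, ha⟩ := hspan (f v) (hfU hv)
  refine ⟨a, fun u hu ↦ ?_⟩
  obtain ⟨c, hc⟩ := hspan u hu
  have hdecomp : f u - a • u = f (u - c • v) + c • (f v - a • v) - a • (u - c • v) := by
    simp only [map_sub, map_smul, smul_sub, smul_comm a c]
    abel
  rw [hdecomp]
  exact U'.sub_mem (U'.add_mem (hfU' hc) (U'.smul_mem c ha)) (U'.smul_mem a hc)

end ScalarModulo

section SolvableAction

open scoped commutatorElement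

variable {R M Γ : Type*} [CommRing R] [AddCommGroup M] [Module R M] [Group Γ]
  {ρ : Representation R Γ M} {U U' U'' : Subrepresentation ρ}

/-- The subgroup of the elements of `Γ` that act trivially on the subquotient `U / U'`. -/
def subquotientKernel (U U' : Subrepresentation ρ) : Subgroup Γ where
  carrier := {g | ∀ u ∈ U.toSubmodule, ρ g u - u ∈ U'.toSubmodule}
  one_mem' u _ := by simp
  mul_mem' {g h} hg hh u hu := by
    simpa using U'.toSubmodule.add_mem (U'.apply_mem_toSubmodule g (hh u hu)) (hg u hu)
  inv_mem' {g} hg u hu := by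
    simpa using U'.toSubmodule.neg_mem (U'.apply_mem_toSubmodule g⁻¹ (hg u hu))

theorem commutator_le_subquotientKernel {N : Subgroup Γ}
    (h : ∀ g ∈ N, ∀ k ∈ N, ∀ u ∈ U.toSubmodule,
      ρ g (ρ k u) - ρ k (ρ g u) ∈ U'.toSubmodule) :
    ⁅N, N⁆ ≤ subquotientKernel U U' := by
  refine Subgroup.commutator_le.2 fun g hg k hk u hu ↦ ?_
  have hgk := h g hg k hk _ (U.apply_mem_toSubmodule (g⁻¹ * k⁻¹) hu)
  simpa [commutatorElement_def] using hgk

/-- The group `Γ` acts on the subquotient `U / U'` through a solvable quotient: some term of its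
derived series acts trivially there. -/
def ActsSolvably (U U' : Subrepresentation ρ) : Prop :=
  ∃ n, derivedSeries Γ n ≤ subquotientKernel U U'

theorem ActsSolvably.of_isScalarModulo
    (h : ∀ g, IsScalarModulo (ρ g) U.toSubmodule U'.toSubmodule) : ActsSolvably U U' :=
  ⟨1, commutator_le_subquotientKernel fun g _ k _ _ ↦ (h g).apply_apply_sub_mem (h k)
    (U'.apply_mem_toSubmodule g) (U'.apply_mem_toSubmodule k)⟩

-- On `U / U''`, such elements differ from the identity by maps `U / U' → U' / U''`, and any two
-- of these maps compose to zero.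
theorem commutator_inf_le_subquotientKernel :
    ⁅subquotientKernel U U' ⊓ subquotientKernel U' U'',
      subquotientKernel U U' ⊓ subquotientKernel U' U''⁆ ≤ subquotientKernel U U'' := by
  refine commutator_le_subquotientKernel fun g hg k hk u hu ↦ ?_
  have hswap : ρ g (ρ k u) - ρ k (ρ g u) =
      (ρ g (ρ k u - u) - (ρ k u - u)) - (ρ k (ρ g u - u) - (ρ g u - u)) := by
    simp only [map_sub]
    abel
  rw [hswap]
  exact U''.toSubmodule.sub_mem (hg.2 _ (hk.1 u hu)) (hk.2 _ (hg.1 u hu))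

theorem ActsSolvably.trans (h : ActsSolvably U U') (h' : ActsSolvably U' U'') :
    ActsSolvably U U'' := by
  obtain ⟨m, hm⟩ := h
  obtain ⟨n, hn⟩ := h'
  have hle : derivedSeries Γ (max m n) ≤ subquotientKernel U U' ⊓ subquotientKernel U' U'' :=
    le_inf ((derivedSeries_antitone Γ (le_max_left m n)).trans hm)
      ((derivedSeries_antitone Γ (le_max_right m n)).trans hn)
  exact ⟨max m n + 1, (Subgroup.commutator_mono hle hle).trans commutator_inf_le_subquotientKernel⟩

theorem ActsSolvably.isSolvable (h : ActsSolvably (⊤ : Subrepresentation ρ) ⊥)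
    (hρ : Function.Injective ρ) : Group.IsSolvable Γ := by
  obtain ⟨n, hn⟩ := h
  refine ⟨n, (Subgroup.eq_bot_iff_forall _).2 fun g hg ↦ hρ (LinearMap.ext fun v ↦ ?_)⟩
  have hv : ρ g v - v = 0 := hn hg v trivial
  simpa using sub_eq_zero.1 hv

end SolvableAction

section InvariantSubspaces

variable {F V : Type*} [Field F] [IsAlgClosed F] [AddCommGroup V] [Module F V]
  [FiniteDimensional F V]

theorem exists_inf_eigenspace_ne_bot_and_lt {k : Module.End F V} {W : Submodule F V}
    (hkW : W ∈ k.invtSubmodule) (hk : ¬ IsScalarModulo k W ⊥) :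
    ∃ c, W ⊓ k.eigenspace c ≠ ⊥ ∧ W ⊓ k.eigenspace c < W := by
  have hW : W ≠ ⊥ := by
    rintro rfl
    exact hk ⟨0, by simp⟩
  have : Nontrivial W := Submodule.nontrivial_iff_ne_bot.2 hW
  obtain ⟨c, hc⟩ := Module.End.exists_eigenvalue (k.restrict hkW)
  obtain ⟨v, hv⟩ := hc.exists_hasEigenvector
  refine ⟨c, (Submodule.ne_bot_iff _).2 ⟨v, ⟨v.2, ?_⟩, by simpa using hv.2⟩,
    inf_lt_left.2 fun hle ↦ hk ⟨c, fun u hu ↦ ?_⟩⟩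
  · exact Module.End.mem_eigenspace_iff.2 (congrArg Subtype.val hv.apply_eq_smul)
  · simpa [sub_eq_zero] using Module.End.mem_eigenspace_iff.1 (hle hu)

theorem exists_finrank_le_two_forall_commute_mem_invtSubmodule (hV : Module.finrank F V ≤ 3)
    {k : Module.End F V} (hk : ¬ IsScalarModulo k ⊤ ⊥) :
    ∃ W : Submodule F V, Module.finrank F W ≤ 2 ∧ Module.finrank F V ≤ Module.finrank F W + 1 ∧
      ∀ f, Commute f k → W ∈ f.invtSubmodule := by
  obtain ⟨c, hbot, htop⟩ :=
    exists_inf_eigenspace_ne_bot_and_lt (Module.End.invtSubmodule.top_mem k) hk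
  rw [top_inf_eq] at hbot htop
  have hpos := Submodule.one_le_finrank_iff.2 hbot
  have hlt := Submodule.finrank_lt htop.ne
  by_cases hdim : Module.finrank F V ≤ Module.finrank F (k.eigenspace c) + 1
  · exact ⟨k.eigenspace c, by omega, hdim, fun f hf ↦
      Module.End.mapsTo_genEigenspace_of_comm hf.symm c 1⟩
  · have hrank := (k - c • 1).finrank_range_add_finrank_ker
    rw [← Module.End.eigenspace_def] at hrank
    refine ⟨LinearMap.range (k - c • 1), by omega, by omega, fun f hf ↦ ?_⟩
    rintro _ ⟨v, rfl⟩
    have hcomm : Commute f (k - c • 1) :=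
      hf.sub_right ((Commute.one_right f).smul_right c)
    exact ⟨f v, (LinearMap.congr_fun hcomm.eq v).symm⟩

theorem exists_finrank_le_one_forall_commute_mem_invtSubmodule {W : Submodule F V}
    (hW : Module.finrank F W ≤ 2) (hVW : Module.finrank F V ≤ Module.finrank F W + 1)
    {k : Module.End F V} (hk : ¬ IsScalarModulo k W ⊥) :
    ∃ L ≤ W, Module.finrank F L ≤ 1 ∧ Module.finrank F W ≤ Module.finrank F L + 1 ∧
      ∀ f, Commute f k → W ∈ f.invtSubmodule → L ∈ f.invtSubmodule := by
  by_cases hkW : W ∈ k.invtSubmodule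
  · obtain ⟨c, hbot, hlt⟩ := exists_inf_eigenspace_ne_bot_and_lt hkW hk
    have hpos := Submodule.one_le_finrank_iff.2 hbot
    have hfin := Submodule.finrank_lt_finrank_of_lt hlt
    exact ⟨W ⊓ k.eigenspace c, inf_le_left, by omega, by omega, fun f hf hfW ↦
      Module.End.invtSubmodule.inf_mem hfW (Module.End.mapsTo_genEigenspace_of_comm hf.symm c 1)⟩
  · have hlt : W ⊓ W.comap k < W := inf_lt_left.2 hkW
    have hfin := Submodule.finrank_lt_finrank_of_lt hlt
    refine ⟨W ⊓ W.comap k, inf_le_left, by omega, ?_, fun f hf hfW u hu ↦ ⟨hfW hu.1, ?_⟩⟩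
    · have hrank := (W.mkQ ∘ₗ k ∘ₗ W.subtype).finrank_range_add_finrank_ker
      have hquot := W.finrank_quotient_add_finrank
      have hrange := (LinearMap.range (W.mkQ ∘ₗ k ∘ₗ W.subtype)).finrank_le
      have hker : LinearMap.ker (W.mkQ ∘ₗ k ∘ₗ W.subtype) = (W ⊓ W.comap k).submoduleOf W := by
        ext
        simp [Submodule.submoduleOf]
      rw [hker, (Submodule.submoduleOfEquivOfLe hlt.le).finrank_eq] at hrank
      omega
    · have hcomm : k (f u) = f (k u) := (LinearMap.congr_fun hf.eq u).symm
      simpa [hcomm] using hfW hu.2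

end InvariantSubspaces

section CommutingGroups

variable {H K : Type*} [Group H] [Group K]

theorem isSolvable_or_isSolvable_of_commute_representation {F V : Type*} [Field F] [IsAlgClosed F]
    [AddCommGroup V] [Module F V] [FiniteDimensional F V] (hV : Module.finrank F V ≤ 3)
    {ρ : Representation F H V} {σ : Representation F K V}
    (hρ : Function.Injective ρ) (hσ : Function.Injective σ) (hc : ∀ h k, Commute (ρ h) (σ k)) :
    Group.IsSolvable H ∨ Group.IsSolvable K := by
  by_cases hscalar : ∀ k, IsScalarModulo (σ k) ⊤ ⊥
  · exact .inr ((ActsSolvably.of_isScalarModulo hscalar).isSolvable hσ)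
  obtain ⟨b, hb⟩ := not_forall.1 hscalar
  obtain ⟨W, hW, hVW, hWinv⟩ := exists_finrank_le_two_forall_commute_mem_invtSubmodule hV hb
  have hVW' : Module.finrank F (⊤ : Submodule F V) ≤ Module.finrank F W + 1 := by
    rwa [finrank_top]
  by_cases hKW : ∀ k, IsScalarModulo (σ k) W ⊥
  · right
    let WK : Subrepresentation σ := ⟨W, fun k ↦ (hKW k).mem_invtSubmodule bot_le⟩
    have hKtop : ActsSolvably ⊤ WK := .of_isScalarModulo fun k ↦
      isScalarModulo_of_finrank_le le_top (Module.End.invtSubmodule.top_mem _)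
        (WK.apply_mem_toSubmodule k) hVW'
    exact (hKtop.trans (.of_isScalarModulo hKW)).isSolvable hσ
  · left
    obtain ⟨k, hk⟩ := not_forall.1 hKW
    obtain ⟨L, hLW, hL, hWL, hLinv⟩ :=
      exists_finrank_le_one_forall_commute_mem_invtSubmodule hW hVW hk
    let WH : Subrepresentation ρ := ⟨W, fun h ↦ hWinv _ (hc h b)⟩
    let LH : Subrepresentation ρ := ⟨L, fun h ↦ hLinv _ (hc h k) (WH.apply_mem_toSubmodule h)⟩
    have htop : ActsSolvably ⊤ WH := .of_isScalarModulo fun h ↦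
      isScalarModulo_of_finrank_le le_top (Module.End.invtSubmodule.top_mem _)
        (WH.apply_mem_toSubmodule h) hVW'
    have hmid : ActsSolvably WH LH := .of_isScalarModulo fun h ↦
      isScalarModulo_of_finrank_le hLW (WH.apply_mem_toSubmodule h)
        (LH.apply_mem_toSubmodule h) hWL
    have hbot : ActsSolvably LH ⊥ := .of_isScalarModulo fun h ↦
      isScalarModulo_of_finrank_le bot_le (LH.apply_mem_toSubmodule h)
        (Module.End.invtSubmodule.bot_mem _) (hL.trans (Nat.le_add_left 1 _))
    exact ((htop.trans hmid).trans hbot).isSolvable hρ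

variable {n R : Type*} [Fintype n] [DecidableEq n] [CommRing R] [IsDomain R]

theorem isSolvable_or_isSolvable_of_commute_generalLinearGroup (hn : Fintype.card n ≤ 3)
    {φ : H →* GL n R} {ψ : K →* GL n R} (hφ : Function.Injective φ) (hψ : Function.Injective ψ)
    (hc : ∀ h k, Commute (φ h) (ψ k)) : Group.IsSolvable H ∨ Group.IsSolvable K := by
  let E := AlgebraicClosure (FractionRing R)
  let ι : R →+* E := (algebraMap (FractionRing R) E).comp (algebraMap R (FractionRing R))
  have hι : Function.Injective ι :=
    (algebraMap (FractionRing R) E).injective.comp (IsFractionRing.injective R (FractionRing R))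
  let τ : Representation E (GL n R) (n → E) :=
    (Units.coeHom _).comp ((Matrix.GeneralLinearGroup.toLin).toMonoidHom.comp
      (Matrix.GeneralLinearGroup.map ι))
  have hτ : Function.Injective τ :=
    Units.val_injective.comp ((Matrix.GeneralLinearGroup.toLin).injective.comp
      (Units.map_injective (Matrix.map_injective hι)))
  exact isSolvable_or_isSolvable_of_commute_representation (by simpa using hn)
    (ρ := τ.comp φ) (σ := τ.comp ψ) (hτ.comp hφ) (hτ.comp hψ) fun h k ↦ (hc h k).map τ

theorem no_embedding_in_GL3_of_commuting_square_general (hn : Fintype.card n ≤ 3)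
    {G : Type*} [Group G] {A B C D : G}
    (hAB : Commute A B) (hBC : Commute B C) (hCD : Commute C D) (hDA : Commute D A)
    (hAC : ¬ Group.IsSolvable ↥(Subgroup.closure ({A, C} : Set G)))
    (hBD : ¬ Group.IsSolvable ↥(Subgroup.closure ({B, D} : Set G))) :
    ¬ ∃ ρ : G →* GL n R, Function.Injective ρ := by
  rintro ⟨ρ, hρ⟩
  have hgen : ∀ x ∈ ({A, C} : Set G), ∀ y ∈ ({B, D} : Set G), Commute x y := by
    rintro x (rfl | rfl) y (rfl | rfl)
    exacts [hAB, hDA.symm, hBC.symm, hCD]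
  have hsolv := isSolvable_or_isSolvable_of_commute_generalLinearGroup hn
    (φ := ρ.comp (Subgroup.closure {A, C}).subtype) (ψ := ρ.comp (Subgroup.closure {B, D}).subtype)
    (hρ.comp Subtype.val_injective) (hρ.comp Subtype.val_injective)
    fun x y ↦ (commute_of_mem_closure hgen x.2 y.2).map ρ
  exact hsolv.elim hAC hBD

end CommutingGroups

/-- If a group `G` has elements `A, B, C, D` with `A` commuting
with `B`, `B` with `C`, `C` with `D` and `D` with `A`, and both `⟨A,C⟩` and
`⟨B,D⟩` are non-solvable, then `G` has no faithful representation in `GL(3,F)`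
for any field `F`. -/
theorem no_embedding_in_GL3_of_commuting_square
    (G : Type*) [Group G] (A B C D : G)
    (hAB : Commute A B) (hBC : Commute B C) (hCD : Commute C D) (hDA : Commute D A)
    (hAC : ¬ IsSolvable ↥(Subgroup.closure ({A, C} : Set G)))
    (hBD : ¬ IsSolvable ↥(Subgroup.closure ({B, D} : Set G))) :
    ∀ (F : Type*) [Field F], ¬ ∃ ρ : G →* GL (Fin 3) F, Function.Injective ρ :=
  fun _ _ ↦ no_embedding_in_GL3_of_commuting_square_general (by simp) hAB hBC hCD hDA hAC hBD
end

section
/- Let F₂ denote the free group of rank 2. For every field F there is no injective group homomorphism from the direct product F₂ × F₂ into GL(3,F). More generally, if a group G contains a subgroup isomorphic to F₂ × F₂, then there is no injective group homomorphism from G into GL(3,F) for any field F. -/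
open scoped MatrixGroups

/-!
Over an algebraically closed field, one of two commuting groups `A` and `B` of operators on a space
`V` of dimension at most three is solvable. Invariant subspaces reduce this to the case where `V` is
irreducible under `A × B`, since a subspace and its quotient cannot both have dimension greater than
one. In the irreducible case let `W` be a minimal nonzero `B`-invariant subspace. If `W = V`, then
`A` acts by scalars by Schur's lemma. Otherwise some translate of `W` under `A` meets `W` trivially,
so `2 * dim W ≤ 3` and `W` is a line. The vectors on which `B` acts by the character it has on this
line form an `A × B`-invariant subspace, hence all of `V`, and `B` acts by scalars.

A free group of rank at least two is not solvable because it maps onto the symmetric group on five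
letters.
-/

section HasSolvableImage

variable {G M : Type*} [Group G] [Monoid M]

/-- The homomorphism `f` has solvable image. The condition is phrased through the derived series of
the source so that the target may be a mere monoid, such as the endomorphisms of a module. -/
def HasSolvableImage (f : G →* M) : Prop :=
  ∃ n, derivedSeries G n ≤ f.ker

lemma commutator_le_ker_of_commute_s3 {f : G →* M} {N : Subgroup G}
    (h : ∀ a ∈ N, ∀ b ∈ N, Commute (f a) (f b)) : ⁅N, N⁆ ≤ f.ker := by
  rw [Subgroup.commutator_le]
  intro a ha b hb
  rw [MonoidHom.mem_ker, commutatorElement_def]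
  calc f (a * b * a⁻¹ * b⁻¹) = f a * f b * f (b * a)⁻¹ := by
        simp only [mul_inv_rev, map_mul, mul_assoc]
    _ = f (b * a) * f (b * a)⁻¹ := by rw [(h a ha b hb).eq, map_mul]
    _ = 1 := by rw [← map_mul, mul_inv_cancel, map_one]

namespace HasSolvableImage

lemma of_commute {f : G →* M} (h : ∀ a b, Commute (f a) (f b)) : HasSolvableImage f := by
  refine ⟨1, ?_⟩
  rw [derivedSeries_succ, derivedSeries_zero]
  exact commutator_le_ker_of_commute_s3 fun a _ b _ => h a b

lemma of_comp_injective {N : Type*} [Monoid N] {f : G →* M} {g : M →* N}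
    (hg : Function.Injective g) (h : HasSolvableImage (g.comp f)) : HasSolvableImage f :=
  h.imp fun _ hn _ hx => hg ((hn hx).trans (map_one g).symm)

lemma isSolvable_of_injective {f : G →* M} (h : HasSolvableImage f)
    (hf : Function.Injective f) : Group.IsSolvable G := by
  obtain ⟨n, hn⟩ := h
  exact ⟨n, le_bot_iff.mp (hn.trans ((MonoidHom.ker_eq_bot_iff f).mpr hf).le)⟩

lemma of_scalar {k V : Type*} [CommSemiring k] [AddCommMonoid V] [Module k V]
    {ρ : Representation k G V} (h : ∀ g, ∃ c, ρ g = algebraMap k (Module.End k V) c) :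
    HasSolvableImage ρ := by
  refine of_commute fun a b => ?_
  obtain ⟨c, hc⟩ := h a
  rw [hc]
  exact Algebra.commute_algebraMap_left c (ρ b)

lemma of_finrank_le_one {k V : Type*} [CommRing k] [Nontrivial k] [AddCommGroup V] [Module k V]
    [Module.Free k V] [Module.Finite k V] (h : Module.finrank k V ≤ 1) (ρ : Representation k G V) :
    HasSolvableImage ρ := by
  obtain ⟨v, hv⟩ := finrank_le_one_iff.mp h
  refine of_scalar fun g => ?_
  obtain ⟨c, hc⟩ := hv (ρ g v)
  refine ⟨c, LinearMap.ext fun w => ?_⟩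
  obtain ⟨d, rfl⟩ := hv w
  rw [map_smul, ← hc, Module.algebraMap_end_apply, smul_comm]

/-- On a common term of the derived series which is trivial on both `W` and `V ⧸ W`, the operators
`ρ g - 1` map `V` to `W` and kill `W`, so they annihilate each other and the `ρ g` commute. -/
lemma of_subrepresentation_of_quotient {k V : Type*} [Ring k] [AddCommGroup V] [Module k V]
    {ρ : Representation k G V} (W : Submodule k V) (hW : ∀ g, W ≤ W.comap (ρ g))
    (hsub : HasSolvableImage (ρ.subrepresentation W hW))
    (hquot : HasSolvableImage (ρ.quotient W hW)) : HasSolvableImage ρ := by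
  obtain ⟨m, hm⟩ := hsub
  obtain ⟨n, hn⟩ := hquot
  set N := derivedSeries G (max m n)
  have fixes_sub (g) (hg : g ∈ N) (w) (hw : w ∈ W) : ρ g w = w :=
    congrArg Subtype.val
      (LinearMap.congr_fun (hm (derivedSeries_antitone G (le_max_left m n) hg)) ⟨w, hw⟩)
  have fixes_quotient (g) (hg : g ∈ N) (v) : ρ g v - v ∈ W :=
    (Submodule.Quotient.eq W).mp
      (LinearMap.congr_fun (hn (derivedSeries_antitone G (le_max_right m n) hg)) (W.mkQ v))
  have mul_eq_zero (a) (ha : a ∈ N) (b) (hb : b ∈ N) : (ρ a - 1) * (ρ b - 1) = 0 :=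
    LinearMap.ext fun v => sub_eq_zero.mpr (fixes_sub a ha _ (fixes_quotient b hb v))
  refine ⟨max m n + 1, commutator_le_ker_of_commute_s3 fun a ha b hb => ?_⟩
  have commute_sub_one : Commute (ρ a - 1) (ρ b - 1) :=
    (mul_eq_zero a ha b hb).trans (mul_eq_zero b hb a ha).symm
  simpa only [sub_add_cancel] using
    (commute_sub_one.add_left (.one_left _)).add_right (.one_right _)

end HasSolvableImage

end HasSolvableImage

section Subrepresentation

variable {k G V : Type*} [Monoid G] [AddCommGroup V]

lemma nontrivial_subrepresentation_iff [Ring k] [Module k V] (ρ : Representation k G V) :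
    Nontrivial (Subrepresentation ρ) ↔ Nontrivial V := by
  rw [← Submodule.nontrivial_iff k (M := V), ← not_subsingleton_iff_nontrivial,
    ← not_subsingleton_iff_nontrivial, ← subsingleton_iff_bot_eq_top, ← subsingleton_iff_bot_eq_top]
  exact not_congr Subrepresentation.toSubmodule_injective.eq_iff.symm

lemma exists_isAtom_subrepresentation [Ring k] [Module k V] [IsArtinian k V] [Nontrivial V]
    (ρ : Representation k G V) : ∃ W : Subrepresentation ρ, IsAtom W := by
  have toSubmodule_strictMono :
      StrictMono (Subrepresentation.toSubmodule : Subrepresentation ρ → Submodule k V) :=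
    fun _ _ h => h
  have := toSubmodule_strictMono.wellFoundedLT
  have : IsAtomic (Subrepresentation ρ) := isAtomic_of_orderBot_wellFounded_lt wellFounded_lt
  have := (nontrivial_subrepresentation_iff ρ).mpr ‹_›
  exact IsAtomic.exists_atom _

lemma exists_eq_algebraMap_of_forall_commute [Field k] [IsAlgClosed k] [Module k V]
    [FiniteDimensional k V] (ρ : Representation k G V) [ρ.IsIrreducible] {T : Module.End k V}
    (hT : ∀ g, Commute T (ρ g)) : ∃ c, T = algebraMap k (Module.End k V) c := by
  obtain ⟨c, hc⟩ := Representation.IsIrreducible.algebraMap_intertwiningMap_bijective_of_isAlgClosed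
    (ρ := ρ) |>.surjective ⟨T, hT⟩
  exact ⟨c, (congrArg Representation.IntertwiningMap.toLinearMap hc).symm⟩

end Subrepresentation

section Prod

variable {k A B V : Type*}

section Translate

variable [Semiring k] [Monoid A] [Monoid B] [AddCommMonoid V] [Module k V]

lemma commute_apply_inl_inr (ρ : Representation k (A × B) V) (a : A) (b : B) :
    Commute (ρ (a, 1)) (ρ (1, b)) :=
  (MonoidHom.commute_inl_inr a b).map ρ

/-- The translate by an element of `A` of a `B`-invariant subspace of a representation of `A × B`.
It is again `B`-invariant because `A` and `B` commute. -/
def translateSubrepresentation {ρ : Representation k (A × B) V} (a : A)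
    (W : Subrepresentation (ρ.comp (.inr A B))) : Subrepresentation (ρ.comp (.inr A B)) where
  toSubmodule := W.toSubmodule.map (ρ (a, 1))
  apply_mem_toSubmodule := by
    rintro b _ ⟨w, hw, rfl⟩
    exact ⟨ρ (1, b) w, W.apply_mem_toSubmodule b hw,
      LinearMap.congr_fun (commute_apply_inl_inr ρ a b).eq w⟩

end Translate

variable [Field k] [AddCommGroup V] [Module k V]

section Monoid

variable [Monoid A] [Monoid B]

lemma eq_bot_or_eq_top_of_invariant (ρ : Representation k (A × B) V) [ρ.IsIrreducible]
    {W : Submodule k V} (hA : ∀ a, ∀ v ∈ W, ρ (a, 1) v ∈ W) (hB : ∀ b, ∀ v ∈ W, ρ (1, b) v ∈ W) :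
    W = ⊥ ∨ W = ⊤ := by
  have invariant (g : A × B) (v : V) (hv : v ∈ W) : ρ g v ∈ W := by
    have := hA g.1 _ (hB g.2 v hv)
    rwa [← Module.End.mul_apply, ← map_mul, Prod.fst_mul_snd] at this
  exact (eq_bot_or_eq_top (⟨W, invariant⟩ : Subrepresentation ρ)).imp
    (congrArg Subrepresentation.toSubmodule) (congrArg Subrepresentation.toSubmodule)

lemma exists_eq_algebraMap_of_common_eigenvector (ρ : Representation k (A × B) V)
    [ρ.IsIrreducible] {w : V} (hw : w ≠ 0) (h : ∀ b, ∃ c : k, ρ (1, b) w = c • w) (b : B) :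
    ∃ c, ρ (1, b) = algebraMap k (Module.End k V) c := by
  choose χ hχ using h
  let E : Submodule k V := ⨅ b, Module.End.eigenspace (ρ (1, b)) (χ b)
  have mem_E {v : V} : v ∈ E ↔ ∀ b, ρ (1, b) v = χ b • v := by
    simp only [E, Submodule.mem_iInf, Module.End.mem_eigenspace_iff]
  have E_invariant_left (a : A) (v : V) (hv : v ∈ E) : ρ (a, 1) v ∈ E := mem_E.mpr fun b => by
    rw [← Module.End.mul_apply, ← (commute_apply_inl_inr ρ a b).eq, Module.End.mul_apply,
      mem_E.mp hv b, map_smul]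
  have E_invariant_right (b : B) (v : V) (hv : v ∈ E) : ρ (1, b) v ∈ E := by
    rw [mem_E.mp hv b]
    exact E.smul_mem _ hv
  have E_eq_top : E = ⊤ :=
    (eq_bot_or_eq_top_of_invariant ρ E_invariant_left E_invariant_right).resolve_left
      (Submodule.ne_bot_iff _ |>.mpr ⟨w, mem_E.mpr hχ, hw⟩)
  exact ⟨χ b, LinearMap.ext fun v => mem_E.mp (E_eq_top ▸ Submodule.mem_top) b⟩

end Monoid

section Irreducible

variable [Group A]

lemma exists_disjoint_translateSubrepresentation [Monoid B] {ρ : Representation k (A × B) V}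
    [ρ.IsIrreducible] {W : Subrepresentation (ρ.comp (.inr A B))} (hW : IsAtom W)
    (hW_top : W ≠ ⊤) : ∃ a, Disjoint W (translateSubrepresentation a W) := by
  by_contra! h
  have le_translate (a : A) : W ≤ translateSubrepresentation a W :=
    hW.not_disjoint_iff_le.mp (h a)
  have invariant (a : A) (v : V) (hv : v ∈ W.toSubmodule) : ρ (a, 1) v ∈ W.toSubmodule := by
    obtain ⟨w, hw, rfl⟩ := le_translate a⁻¹ hv
    rwa [← Module.End.mul_apply, ← map_mul, Prod.mk_mul_mk, mul_inv_cancel, mul_one,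
      Prod.mk_one_one, map_one]
  rcases eq_bot_or_eq_top_of_invariant ρ invariant W.apply_mem_toSubmodule with hbot | htop
  · exact hW.ne_bot (Subrepresentation.ext hbot)
  · exact hW_top (Subrepresentation.ext htop)

lemma two_mul_finrank_le_of_isAtom [Monoid B] [FiniteDimensional k V]
    {ρ : Representation k (A × B) V} [ρ.IsIrreducible]
    {W : Subrepresentation (ρ.comp (.inr A B))} (hW : IsAtom W) (hW_top : W ≠ ⊤) :
    2 * Module.finrank k W.toSubmodule ≤ Module.finrank k V := by
  obtain ⟨a, ha⟩ := exists_disjoint_translateSubrepresentation hW hW_top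
  have disjoint_map : Disjoint W.toSubmodule (W.toSubmodule.map (ρ (a, 1))) :=
    disjoint_iff.mpr (congrArg Subrepresentation.toSubmodule ha.eq_bot)
  have injective : Function.Injective (ρ (a, 1)) :=
    (Representation.apply_bijective (ρ.comp (.inl A B)) a).injective
  have finrank_map :=
    (Submodule.equivMapOfInjective (ρ (a, 1)) injective W.toSubmodule).finrank_eq
  have := Submodule.finrank_add_finrank_le_of_disjoint disjoint_map
  omega

lemma hasSolvableImage_inl_or_inr_of_isIrreducible [Group B] [IsAlgClosed k]
    [FiniteDimensional k V] (ρ : Representation k (A × B) V) [ρ.IsIrreducible]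
    (hV : Module.finrank k V ≤ 3) :
    HasSolvableImage (ρ.comp (.inl A B)) ∨ HasSolvableImage (ρ.comp (.inr A B)) := by
  have := (nontrivial_subrepresentation_iff ρ).mp inferInstance
  obtain ⟨W, hW⟩ := exists_isAtom_subrepresentation (ρ.comp (.inr A B))
  by_cases hW_top : W = ⊤
  · have : Representation.IsIrreducible (ρ.comp (.inr A B)) :=
      isSimpleOrder_iff_isAtom_top.mpr (hW_top ▸ hW)
    exact .inl <| .of_scalar fun a =>
      exists_eq_algebraMap_of_forall_commute (ρ.comp (.inr A B)) (commute_apply_inl_inr ρ a)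
  · have finrank_ne_zero : Module.finrank k W.toSubmodule ≠ 0 := fun h =>
      hW.ne_bot (Subrepresentation.ext (Submodule.finrank_eq_zero.mp h))
    have finrank_eq_one : Module.finrank k W.toSubmodule = 1 := by
      have := two_mul_finrank_le_of_isAtom hW hW_top
      omega
    obtain ⟨w, hw, span_w⟩ := finrank_eq_one_iff'.mp finrank_eq_one
    refine .inr <| .of_scalar <| exists_eq_algebraMap_of_common_eigenvector ρ
      (w := w) (by simpa only [ne_eq, ZeroMemClass.coe_eq_zero] using hw) fun b => ?_
    obtain ⟨c, hc⟩ := span_w ⟨ρ (1, b) w, W.apply_mem_toSubmodule b w.2⟩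
    exact ⟨c, (congrArg Subtype.val hc).symm⟩

end Irreducible

theorem hasSolvableImage_inl_or_inr [Group A] [Group B] [IsAlgClosed k] [FiniteDimensional k V]
    (ρ : Representation k (A × B) V) (hV : Module.finrank k V ≤ 3) :
    HasSolvableImage (ρ.comp (.inl A B)) ∨ HasSolvableImage (ρ.comp (.inr A B)) := by
  induction hd : Module.finrank k V using Nat.strong_induction_on generalizing V with
  | _ d ih =>
  by_cases hV_le_one : Module.finrank k V ≤ 1
  · exact .inl (.of_finrank_le_one hV_le_one _)
  by_cases hirr : ρ.IsIrreducible
  · exact hasSolvableImage_inl_or_inr_of_isIrreducible ρ hV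
  have : Nontrivial V := Module.finrank_pos_iff (R := k) |>.mp (by omega)
  have : Nontrivial (Subrepresentation ρ) := (nontrivial_subrepresentation_iff ρ).mpr this
  obtain ⟨W, hW_bot, hW_top⟩ : ∃ W : Subrepresentation ρ, W ≠ ⊥ ∧ W ≠ ⊤ := by
    by_contra! h
    exact hirr ⟨fun W => or_iff_not_imp_left.mpr (h W)⟩
  have hW : ∀ g, W.toSubmodule ≤ W.toSubmodule.comap (ρ g) := W.apply_mem_toSubmodule
  have hA (a : A) := hW (a, 1)
  have hB (b : B) := hW (1, b)
  have finrank_sub_ne_zero : Module.finrank k W.toSubmodule ≠ 0 := fun h =>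
    hW_bot (Subrepresentation.ext (Submodule.finrank_eq_zero.mp h))
  have finrank_sub_lt : Module.finrank k W.toSubmodule < Module.finrank k V :=
    Submodule.finrank_lt fun h => hW_top (Subrepresentation.ext h)
  have finrank_add := Submodule.finrank_quotient_add_finrank W.toSubmodule
  by_cases hW_le_one : Module.finrank k W.toSubmodule ≤ 1
  · exact (ih _ (by omega) (ρ.quotient W.toSubmodule hW) (by omega) rfl).imp
      (.of_subrepresentation_of_quotient _ hA (.of_finrank_le_one hW_le_one _))
      (.of_subrepresentation_of_quotient _ hB (.of_finrank_le_one hW_le_one _))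
  · have quotient_le_one : Module.finrank k (V ⧸ W.toSubmodule) ≤ 1 := by omega
    exact (ih _ (by omega) (ρ.subrepresentation W.toSubmodule hW) (by omega) rfl).imp
      (.of_subrepresentation_of_quotient _ hA · (.of_finrank_le_one quotient_le_one _))
      (.of_subrepresentation_of_quotient _ hB · (.of_finrank_le_one quotient_le_one _))

end Prod

lemma generalLinearGroup_map_injective {R S n : Type*} [CommRing R] [CommRing S] [Fintype n]
    [DecidableEq n] {f : R →+* S} (hf : Function.Injective f) :
    Function.Injective (Matrix.GeneralLinearGroup.map (n := n) f) :=
  Units.map_injective (Matrix.map_injective hf)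

theorem hasSolvableImage_inl_or_inr_of_card_le {F n A B : Type*} [Field F] [Fintype n]
    [DecidableEq n] [Group A] [Group B] (hn : Fintype.card n ≤ 3) (ρ : A × B →* GL n F) :
    HasSolvableImage (ρ.comp (.inl A B)) ∨ HasSolvableImage (ρ.comp (.inr A B)) := by
  let K := AlgebraicClosure F
  let ι : GL n F →* Module.End K (n → K) :=
    ((Units.coeHom _).comp Matrix.GeneralLinearGroup.toLin.toMonoidHom).comp
      (Matrix.GeneralLinearGroup.map (algebraMap F K))
  have hι : Function.Injective ι := Units.val_injective.comp <|
    Matrix.GeneralLinearGroup.toLin.injective.comp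
      (generalLinearGroup_map_injective (algebraMap F K).injective)
  have finrank_le : Module.finrank K (n → K) ≤ 3 := by rwa [Module.finrank_fintype_fun_eq_card]
  exact (hasSolvableImage_inl_or_inr (ι.comp ρ) finrank_le).imp (.of_comp_injective hι)
    (.of_comp_injective hι)

lemma not_isSolvable_freeGroup (α : Type*) [Nontrivial α] : ¬ Group.IsSolvable (FreeGroup α) := by
  classical
  intro h
  obtain ⟨i, j, hij⟩ := exists_pair_ne α
  let σ : Equiv.Perm (Fin 5) := finRotate 5
  let τ : Equiv.Perm (Fin 5) := Equiv.swap 0 (σ 0)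
  let f : FreeGroup α →* Equiv.Perm (Fin 5) := FreeGroup.lift fun x => if x = i then σ else τ
  have hf : Function.Surjective f := by
    rw [← MonoidHom.range_eq_top, eq_top_iff,
      ← Equiv.Perm.closure_cycle_adjacent_swap (isCycle_finRotate (n := 3)) support_finRotate 0,
      Subgroup.closure_le]
    rintro x (rfl | rfl)
    · exact ⟨FreeGroup.of i, by simp [f, σ]⟩
    · exact ⟨FreeGroup.of j, by simp [f, τ, σ, hij.symm]⟩
  exact Equiv.Perm.not_isSolvable_fin_5 (Group.isSolvable_of_surjective hf)

theorem no_embedding_F2_times_F2_in_GL3_general {F n A B : Type*} [Field F] [Fintype n]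
    [DecidableEq n] [Group A] [Group B] (hn : Fintype.card n ≤ 3) (hA : ¬ Group.IsSolvable A)
    (hB : ¬ Group.IsSolvable B) (ρ : A × B →* GL n F) : ¬ Function.Injective ρ := fun hρ =>
  (hasSolvableImage_inl_or_inr_of_card_le hn ρ).elim
    (fun h => hA (h.isSolvable_of_injective (hρ.comp (Prod.mk_left_injective 1))))
    (fun h => hB (h.isSolvable_of_injective (hρ.comp (Prod.mk_right_injective 1))))

/-- `F₂ × F₂` has no faithful representation in `GL(3,F)` for
any field `F`; more generally, no group containing a subgroup isomorphic to
`F₂ × F₂` embeds in `GL(3,F)` for any field `F`. -/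
theorem no_embedding_F2_times_F2_in_GL3 :
    (∀ (F : Type*) [Field F],
      ¬ ∃ ρ : (FreeGroup (Fin 2) × FreeGroup (Fin 2)) →* GL (Fin 3) F,
        Function.Injective ρ) ∧
    (∀ (G : Type*) [Group G] (H : Subgroup G),
      Nonempty (H ≃* FreeGroup (Fin 2) × FreeGroup (Fin 2)) →
      ∀ (F : Type*) [Field F],
        ¬ ∃ ρ : G →* GL (Fin 3) F, Function.Injective ρ) := by
  have hF₂ := not_isSolvable_freeGroup (Fin 2)
  have h3 : Fintype.card (Fin 3) ≤ 3 := (Fintype.card_fin 3).le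
  exact ⟨fun F _ ⟨ρ, hρ⟩ => no_embedding_F2_times_F2_in_GL3_general h3 hF₂ hF₂ ρ hρ,
    fun G _ H ⟨e⟩ F _ ⟨ρ, hρ⟩ => no_embedding_F2_times_F2_in_GL3_general h3 hF₂ hF₂
      (ρ.comp (H.subtype.comp e.symm.toMonoidHom))
      (hρ.comp (H.subtype_injective.comp e.symm.injective))⟩
end

section
/- Let F be a field, d ≥ 2, and let H be an abelian group with injective homomorphisms i₁ : H → G₁ and i₂ : H → G₂ into groups G₁ and G₂. Suppose ρ₁ : G₁ → GL(d,F) and ρ₂ : G₂ → GL(d,F) are injective group homomorphisms such that: (a) ρ₁ ∘ i₁ = ρ₂ ∘ i₂ on H; (b) ρ₁(i₁(h)) is a diagonal matrix for every h ∈ H; (c) for every g ∈ G₁ not in the image of i₁, the bottom-left entry (row d, column 1) of ρ₁(g) is nonzero, and for every g ∈ G₂ not in the image of i₂, the top-right entry (row 1, column d) of ρ₂(g) is nonzero. Then the amalgamated free product G₁ *_H G₂ (the pushout of i₁ and i₂ in the category of groups) admits an injective group homomorphism into GL(d, F(t)), where F(t) is the field of rational functions in one variable over F. -/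
open scoped MatrixGroups

/-!
Suppose that the `(r i, r j)` entry of `ρ i g` is nonzero for `g ∉ H` and `j ≠ i`, with the `r i`
distinct. Conjugating `ρ i` by the diagonal matrix with an entry `t` of large valuation at `r i` and
`1` elsewhere does not change it on `H`, so the conjugated representations still glue to the
amalgam. Call a vector dominant at `k` if its `k`-th coordinate has strictly the largest valuation.
For `g ∉ H`, the conjugate of `ρ i g` sends vectors dominant at `r j` to vectors dominant at `r i`,
and multiplies the largest valuation by `v t > 1`. The letters of a reduced word thus play ping-pong
while strictly expanding a vector, so the word acts nontrivially.
-/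

open Monoid Monoid.PushoutI

namespace Shalen

section PingPong

variable {ι H : Type*} {G : ι → Type*} [Group H] [∀ i, Group (G i)] {φ : ∀ i, H →* G i}

variable (φ) in
/-- `IsReducedWord φ i w` means that `w` is a nonempty product of letters taken from the `G i`
outside the image of `H`, consecutive ones from different factors, the first one from `G i`.
It is a predicate on elements of the pushout, so no uniqueness of the word is claimed, and the
maps `φ i` need not be injective. -/
inductive IsReducedWord : ι → PushoutI φ → Prop
  | letter {i : ι} {g : G i} (hg : g ∉ (φ i).range) : IsReducedWord i (of i g)
  | cons {i j : ι} {g : G i} {w : PushoutI φ} (hg : g ∉ (φ i).range) (hji : j ≠ i)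
      (hw : IsReducedWord j w) : IsReducedWord i (of i g * w)

theorem IsReducedWord.base_mul {i : ι} {w : PushoutI φ} (hw : IsReducedWord φ i w) (h : H) :
    IsReducedWord φ i (base φ h * w) := by
  have notMem {i : ι} {g : G i} (hg : g ∉ (φ i).range) : φ i h * g ∉ (φ i).range := by
    rwa [Subgroup.mul_mem_cancel_left _ (MonoidHom.mem_range.2 ⟨h, rfl⟩)]
  cases hw with
  | letter hg =>
    rw [← of_apply_eq_base φ i, ← map_mul]
    exact .letter (notMem hg)
  | cons hg hji hw =>
    rw [← of_apply_eq_base φ i, ← mul_assoc, ← map_mul]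
    exact .cons (notMem hg) hji hw

theorem of_mem_range_base_or_isReducedWord {i : ι} (g : G i) :
    of i g ∈ (base φ).range ∨ IsReducedWord φ i (of i g) := by
  by_cases hg : g ∈ (φ i).range
  · obtain ⟨h, rfl⟩ := hg
    exact .inl ⟨h, (of_apply_eq_base φ i h).symm⟩
  · exact .inr (.letter hg)

theorem IsReducedWord.of_mul_mem_range_base_or_exists {i j : ι} {w : PushoutI φ}
    (hw : IsReducedWord φ j w) (g : G i) :
    of i g * w ∈ (base φ).range ∨ ∃ k, IsReducedWord φ k (of i g * w) := by
  by_cases hg : g ∈ (φ i).range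
  · obtain ⟨h, rfl⟩ := hg
    rw [of_apply_eq_base]
    exact .inr ⟨j, hw.base_mul h⟩
  rcases ne_or_eq j i with hji | rfl
  · exact .inr ⟨i, .cons hg hji hw⟩
  cases hw with
  | @letter _ g' _ =>
    rw [← map_mul]
    exact (of_mem_range_base_or_isReducedWord (g * g')).imp_right fun hr => ⟨j, hr⟩
  | @cons _ k g' w _ hkj hw =>
    rw [← mul_assoc, ← map_mul]
    by_cases hgg' : g * g' ∈ (φ j).range
    · obtain ⟨h, hh⟩ := hgg'
      rw [← hh, of_apply_eq_base]
      exact .inr ⟨k, hw.base_mul h⟩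
    · exact .inr ⟨j, .cons hgg' hkj hw⟩

theorem mem_range_base_or_exists_isReducedWord (w : PushoutI φ) :
    w ∈ (base φ).range ∨ ∃ i, IsReducedWord φ i w := by
  suffices ∀ u : PushoutI φ, (u ∈ (base φ).range ∨ ∃ i, IsReducedWord φ i u) →
      (w * u ∈ (base φ).range ∨ ∃ i, IsReducedWord φ i (w * u)) by
    simpa only [mul_one] using this 1 (.inl (one_mem _))
  induction w using PushoutI.induction_on with
  | of i g =>
    rintro _ (⟨h, rfl⟩ | ⟨j, hu⟩)
    · rw [← of_apply_eq_base φ i, ← map_mul]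
      exact (of_mem_range_base_or_isReducedWord _).imp_right fun hr => ⟨i, hr⟩
    · exact hu.of_mul_mem_range_base_or_exists g
  | base h =>
    rintro u (hu | ⟨j, hu⟩)
    · exact .inl (mul_mem ⟨h, rfl⟩ hu)
    · exact .inr ⟨j, hu.base_mul h⟩
  | mul x y hx hy =>
    intro u hu
    rw [mul_assoc]
    exact hx _ (hy u hu)

variable {M α β : Type*} [Monoid M] [MulAction M α] [Preorder β] {ψ : PushoutI φ →* M}
  {X : ι → Set α} {N : α → β}

theorem IsReducedWord.exists_forall_smul_mem_and_lt
    (hψ : ∀ i, ∀ g ∉ (φ i).range, ∀ j ≠ i, ∀ x ∈ X j,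
      ψ (of i g) • x ∈ X i ∧ N x < N (ψ (of i g) • x))
    {i : ι} {w : PushoutI φ} (hw : IsReducedWord φ i w) :
    ∃ l, ∀ k ≠ l, ∀ x ∈ X k, ψ w • x ∈ X i ∧ N x < N (ψ w • x) := by
  induction hw with
  | @letter i g hg => exact ⟨i, hψ i g hg⟩
  | @cons i j g w hg hji _ ih =>
    obtain ⟨l, hl⟩ := ih
    refine ⟨l, fun k hk x hx => ?_⟩
    obtain ⟨hmem, hlt⟩ := hl k hk x hx
    obtain ⟨hmem', hlt'⟩ := hψ i g hg j hji _ hmem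
    rw [map_mul, mul_smul]
    exact ⟨hmem', hlt.trans hlt'⟩

/-- The expansion of `N` replaces the disjointness of the sets `X i` and the cardinality condition
of `Monoid.CoprodI.lift_injective_of_ping_pong`. -/
theorem ker_le_range_base_of_expanding_ping_pong [Nontrivial ι] (hX : ∀ i, (X i).Nonempty)
    (hψ : ∀ i, ∀ g ∉ (φ i).range, ∀ j ≠ i, ∀ x ∈ X j,
      ψ (of i g) • x ∈ X i ∧ N x < N (ψ (of i g) • x)) :
    ψ.ker ≤ (base φ).range := by
  intro w hw
  refine (mem_range_base_or_exists_isReducedWord w).resolve_right ?_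
  rintro ⟨i, hred⟩
  obtain ⟨l, hl⟩ := hred.exists_forall_smul_mem_and_lt hψ
  obtain ⟨k, hk⟩ := exists_ne l
  obtain ⟨x, hx⟩ := hX k
  have hlt : N x < N (ψ w • x) := (hl k hk x hx).2
  rw [ψ.mem_ker.1 hw, one_smul] at hlt
  exact lt_irrefl _ hlt

end PingPong

section Dominant

variable {K Γ₀ n : Type*} [Ring K] [LinearOrderedCommGroupWithZero Γ₀]
  {v : Valuation K Γ₀} {x : n → K} {j k : n}

variable (v) in
/-- The `k`-th coordinate of `x` has strictly larger valuation than all the others. -/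
def IsDominantAt (k : n) (x : n → K) : Prop :=
  ∀ l ≠ k, v (x l) < v (x k)

theorem IsDominantAt.le (hx : IsDominantAt v k x) (l : n) : v (x l) ≤ v (x k) := by
  rcases eq_or_ne l k with rfl | hl
  exacts [le_rfl, (hx l hl).le]

theorem IsDominantAt.sup_eq [Fintype n] (hx : IsDominantAt v k x) :
    Finset.univ.sup (fun l => v (x l)) = v (x k) :=
  le_antisymm (Finset.sup_le fun l _ => hx.le l)
    (Finset.le_sup (f := fun l => v (x l)) (Finset.mem_univ k))

theorem isDominantAt_single [DecidableEq n] (k : n) :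
    IsDominantAt v k (Pi.single k 1) := by
  intro l hl
  simp [hl]

theorem valuation_mulVec_le [Fintype n] {A : Matrix n n K} (hA : ∀ l m, v (A l m) ≤ 1)
    (hx : IsDominantAt v k x) (l : n) : v (A.mulVec x l) ≤ v (x k) := by
  refine v.map_sum_le fun m _ => ?_
  rw [map_mul]
  exact mul_le_of_le_one_of_le (hA l m) (hx.le m)

theorem valuation_mulVec_eq [Fintype n] {A : Matrix n n K} (hA : ∀ l m, v (A l m) ≤ 1)
    (hjk : v (A j k) = 1) (hx : IsDominantAt v k x) : v (A.mulVec x j) = v (x k) := by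
  classical
  have hmain : v (A j k * x k) = v (x k) := by rw [map_mul, hjk, one_mul]
  rw [← hmain]
  refine v.map_sum_eq_of_lt (Finset.mem_univ k) fun m hm => ?_
  rw [hmain, map_mul]
  exact mul_lt_of_le_one_of_lt (hA j m) (hx m (by simpa using hm))

end Dominant

section Twist

variable {F K Γ₀ n : Type*} [CommRing F] [CommRing K] [Algebra F K]
  [LinearOrderedCommGroupWithZero Γ₀] [Fintype n] [DecidableEq n] {x : n → K} {j k : n}

/-- The invertible diagonal matrix with entry `t` at `(j, j)` and `1` elsewhere on the diagonal. -/
def diagonalSingle (t : Kˣ) (j : n) : GL n K :=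
  Units.map (Matrix.diagonalRingHom n K).toMonoidHom (MulEquiv.piUnits.symm (Pi.mulSingle j t))

theorem diagonalSingle_inv (t : Kˣ) (j : n) : (diagonalSingle t j)⁻¹ = diagonalSingle t⁻¹ j := by
  simp [diagonalSingle, Pi.mulSingle_inv]

theorem diagonalSingle_smul_apply (t : Kˣ) (j k : n) (x : n → K) :
    (diagonalSingle t j • x) k = (Pi.mulSingle j t : n → Kˣ) k * x k :=
  Matrix.mulVec_diagonal _ _ _

theorem diagonalSingle_smul_apply_same (t : Kˣ) (j : n) (x : n → K) :
    (diagonalSingle t j • x) j = t * x j := by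
  rw [diagonalSingle_smul_apply, Pi.mulSingle_eq_same]

theorem diagonalSingle_smul_apply_of_ne (t : Kˣ) (hkj : k ≠ j) (x : n → K) :
    (diagonalSingle t j • x) k = x k := by
  rw [diagonalSingle_smul_apply, Pi.mulSingle_eq_of_ne hkj, Units.val_one, one_mul]

/-- Extension of scalars from `F` to `K`, followed by conjugation by `diagonalSingle t j`. -/
def twistedMap (F : Type*) [CommRing F] [Algebra F K] (t : Kˣ) (j : n) : GL n F →* GL n K :=
  (MulAut.conj (diagonalSingle t j)).toMonoidHom.comp
    (Matrix.GeneralLinearGroup.map (algebraMap F K))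

theorem twistedMap_smul (t : Kˣ) (j : n) (A : GL n F) (x : n → K) :
    twistedMap F t j A • x = diagonalSingle t j •
      (A.val.map (algebraMap F K)).mulVec (diagonalSingle t⁻¹ j • x) := by
  rw [← diagonalSingle_inv]
  simp only [twistedMap, MonoidHom.comp_apply]
  exact (mul_smul _ _ _).trans (mul_smul _ _ _)

theorem twistedMap_of_isDiag (t : Kˣ) (j : n) {A : GL n F} (hA : A.val.IsDiag) :
    twistedMap F t j A = Matrix.GeneralLinearGroup.map (algebraMap F K) A := by
  refine mul_inv_eq_of_eq_mul (Units.ext ?_)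
  have hdiag : (A.val.map (algebraMap F K)).IsDiag := hA.map (map_zero _)
  change Matrix.diagonal _ * A.val.map _ = A.val.map _ * Matrix.diagonal _
  rw [← hdiag.diagonal_diag]
  exact Matrix.commute_diagonal _ _

variable {v : Valuation K Γ₀} {t : Kˣ}

theorem IsDominantAt.diagonalSingle_inv_smul (hx : IsDominantAt v k x) (ht : 1 ≤ v t)
    (hkj : k ≠ j) : IsDominantAt v k (diagonalSingle t⁻¹ j • x) := by
  intro l hlk
  rw [diagonalSingle_smul_apply_of_ne _ hkj]
  rcases eq_or_ne l j with rfl | hlj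
  · have hle : v ↑t⁻¹ ≤ 1 := by
      rw [map_units_inv]
      exact inv_le_one_of_one_le₀ ht
    rw [diagonalSingle_smul_apply_same, map_mul]
    exact mul_lt_of_le_one_of_lt hle (hx l hlk)
  · rw [diagonalSingle_smul_apply_of_ne _ hlj]
    exact hx l hlk

variable [v.IsTrivialOn F] {A : GL n F}

theorem valuation_twistedMap_smul_le (hx : IsDominantAt v k x) (ht : 1 ≤ v t) (hkj : k ≠ j)
    (A : GL n F) {l : n} (hlj : l ≠ j) :
    v ((twistedMap F t j A • x) l) ≤ v (x k) := by
  rw [twistedMap_smul, diagonalSingle_smul_apply_of_ne _ hlj,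
    ← diagonalSingle_smul_apply_of_ne t⁻¹ hkj x]
  exact valuation_mulVec_le (fun l m => Valuation.IsTrivialOn.valuation_algebraMap_le_one v _)
    (hx.diagonalSingle_inv_smul ht hkj) l

theorem valuation_twistedMap_smul_eq (hx : IsDominantAt v k x) (ht : 1 ≤ v t) (hkj : k ≠ j)
    (hA : A j k ≠ 0) :
    v ((twistedMap F t j A • x) j) = v t * v (x k) := by
  rw [twistedMap_smul, diagonalSingle_smul_apply_same, map_mul,
    ← diagonalSingle_smul_apply_of_ne t⁻¹ hkj x]
  congr 1
  exact valuation_mulVec_eq (fun l m => Valuation.IsTrivialOn.valuation_algebraMap_le_one v _)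
    (Valuation.IsTrivialOn.eq_one _ hA) (hx.diagonalSingle_inv_smul ht hkj)

theorem IsDominantAt.twistedMap_smul (hx : IsDominantAt v k x) (ht : 1 < v t) (hkj : k ≠ j)
    (hA : A j k ≠ 0) :
    IsDominantAt v j (twistedMap F t j A • x) := by
  intro l hlj
  have hpos : 0 < v (x k) := zero_le.trans_lt (hx j hkj.symm)
  calc v ((twistedMap F t j A • x) l) ≤ v (x k) :=
        valuation_twistedMap_smul_le hx ht.le hkj A hlj
    _ < v t * v (x k) := lt_mul_of_one_lt_left hpos ht
    _ = v ((twistedMap F t j A • x) j) := (valuation_twistedMap_smul_eq hx ht.le hkj hA).symm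

theorem IsDominantAt.sup_lt_sup_twistedMap_smul (hx : IsDominantAt v k x) (ht : 1 < v t)
    (hkj : k ≠ j) (hA : A j k ≠ 0) :
    (Finset.univ.sup fun l => v (x l)) <
      Finset.univ.sup fun l => v ((twistedMap F t j A • x) l) := by
  have hpos : 0 < v (x k) := zero_le.trans_lt (hx j hkj.symm)
  rw [hx.sup_eq, (hx.twistedMap_smul ht hkj hA).sup_eq,
    valuation_twistedMap_smul_eq hx ht.le hkj hA]
  exact lt_mul_of_one_lt_left hpos ht

end Twist

section Amalgam

variable {F K Γ₀ n ι H : Type*} [CommRing F] [CommRing K] [Algebra F K]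
  [LinearOrderedCommGroupWithZero Γ₀] [Fintype n] [DecidableEq n]
  {G : ι → Type*} [Group H] [∀ i, Group (G i)] {φ : ∀ i, H →* G i}

theorem algebraMap_injective_of_isTrivialOn {F K Γ₀ : Type*} [CommRing F] [Ring K] [Algebra F K]
    [LinearOrderedCommGroupWithZero Γ₀] (v : Valuation K Γ₀) [v.IsTrivialOn F] :
    Function.Injective (algebraMap F K) := by
  refine (injective_iff_map_eq_zero _).2 fun a ha => ?_
  by_contra hne
  have hone : v (algebraMap F K a) = 1 := Valuation.IsTrivialOn.eq_one a hne
  simp [ha] at hone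

/-- The representation of the amalgam over `K` glued from the `ρ i`, each conjugated by
`diagonalSingle t (r i)`. -/
def twistedLift (t : Kˣ) (r : ι → n) (ρ : ∀ i, G i →* GL n F) (σ : H →* GL n F)
    (hσ : ∀ i, (ρ i).comp (φ i) = σ) (hdiag : ∀ h, (σ h).val.IsDiag) :
    PushoutI φ →* GL n K :=
  PushoutI.lift (fun i => (twistedMap F t (r i)).comp (ρ i))
    ((Matrix.GeneralLinearGroup.map (algebraMap F K)).comp σ) fun i => by
      ext1 h
      rw [MonoidHom.comp_assoc, hσ i]
      exact twistedMap_of_isDiag t (r i) (hdiag h)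

variable {v : Valuation K Γ₀} [v.IsTrivialOn F] {t : Kˣ} {r : ι → n} {ρ : ∀ i, G i →* GL n F}
  {σ : H →* GL n F} {hσ : ∀ i, (ρ i).comp (φ i) = σ} {hdiag : ∀ h, (σ h).val.IsDiag}

theorem ker_twistedLift_le_range_base [Nontrivial ι] (ht : 1 < v t) (hr : Function.Injective r)
    (hcorner : ∀ i j, i ≠ j → ∀ g ∉ Set.range (φ i), ρ i g (r i) (r j) ≠ 0) :
    (twistedLift t r ρ σ hσ hdiag).ker ≤ (base φ).range := by
  refine ker_le_range_base_of_expanding_ping_pong (X := fun i => {x | IsDominantAt v (r i) x})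
    (N := fun x => Finset.univ.sup fun l => v (x l))
    (fun i => ⟨_, isDominantAt_single (r i)⟩) fun i g hg j hji x hx => ?_
  rw [twistedLift, lift_of]
  have hne : ρ i g (r i) (r j) ≠ 0 := hcorner i j hji.symm g hg
  exact ⟨hx.twistedMap_smul ht (hr.ne hji) hne, hx.sup_lt_sup_twistedMap_smul ht (hr.ne hji) hne⟩

theorem twistedLift_injective [Nontrivial ι] (ht : 1 < v t) (hr : Function.Injective r)
    (hcorner : ∀ i j, i ≠ j → ∀ g ∉ Set.range (φ i), ρ i g (r i) (r j) ≠ 0)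
    (i₀ : ι) (hρ : Function.Injective (ρ i₀)) :
    Function.Injective (twistedLift t r ρ σ hσ hdiag : PushoutI φ →* GL n K) := by
  refine (injective_iff_map_eq_one _).2 fun w hw => ?_
  obtain ⟨h, rfl⟩ := ker_twistedLift_le_range_base ht hr hcorner hw
  have hmap : Function.Injective (Matrix.GeneralLinearGroup.map (n := n) (algebraMap F K)) :=
    Units.map_injective (Matrix.map_injective (algebraMap_injective_of_isTrivialOn v))
  have hσh : σ h = 1 := by
    rw [twistedLift, lift_base] at hw
    exact hmap (hw.trans (map_one _).symm)
  have hφh : φ i₀ h = 1 := hρ (by rw [map_one, ← hσh, ← hσ i₀, MonoidHom.comp_apply])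
  rw [← of_apply_eq_base φ i₀, hφh, map_one]

end Amalgam

end Shalen

theorem shalen_amalgam_embeds_in_GL_ratFunc_general
    {F n ι H : Type*} [Field F] [Fintype n] [DecidableEq n] [Nontrivial ι] [Group H]
    {G : ι → Type*} [∀ i, Group (G i)] (φ : ∀ i, H →* G i)
    (ρ : ∀ i, G i →* GL n F) (σ : H →* GL n F) (hσ : ∀ i, (ρ i).comp (φ i) = σ)
    (hdiag : ∀ h, (σ h).val.IsDiag) (i₀ : ι) (hρ : Function.Injective (ρ i₀))
    (r : ι → n) (hr : Function.Injective r)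
    (hcorner : ∀ i j, i ≠ j → ∀ g ∉ Set.range (φ i), ρ i g (r i) (r j) ≠ 0) :
    ∃ ψ : PushoutI φ →* GL n (RatFunc F), Function.Injective ψ := by
  classical
  have hX : 1 < RatFunc.inftyValuation F
      (Units.mk0 RatFunc.X RatFunc.X_ne_zero : (RatFunc F)ˣ) := by
    rw [Units.val_mk0, RatFunc.inftyValuation.X, ← WithZero.exp_zero]
    exact WithZero.exp_lt_exp.2 one_pos
  exact ⟨Shalen.twistedLift _ r ρ σ hσ hdiag, Shalen.twistedLift_injective hX hr hcorner i₀ hρ⟩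

/-- Shalen's linearity criterion for amalgamated free
products. Here the amalgamated free product `G₁ *_H G₂` is realised as
`Monoid.PushoutI i`, the pushout in the category of groups of the family
of injections `i b : H → G b` indexed by `b : Bool` (with `G₁ = G true` and
`G₂ = G false`). Given faithful `d`-dimensional representations `ρ b` of the
`G b` over a field `F` which agree on `H`, are diagonal on `H`, and satisfy
the corner-entry condition off `H`, the amalgam embeds in `GL(d, F(t))`. -/
theorem shalen_amalgam_embeds_in_GL_ratFunc
    (F : Type) [Field F] (d : ℕ) (hd : 2 ≤ d)
    (H : Type) [CommGroup H] (G : Bool → Type) [∀ b, Group (G b)]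
    (i : ∀ b, H →* G b) (hi : ∀ b, Function.Injective (i b))
    (ρ : ∀ b, G b →* GL (Fin d) F) (hρ : ∀ b, Function.Injective (ρ b))
    (hagree : ∀ h : H, ρ true (i true h) = ρ false (i false h))
    (hdiag : ∀ h : H, Matrix.IsDiag ((ρ true (i true h) : GL (Fin d) F) : Matrix (Fin d) (Fin d) F))
    (hbotleft : ∀ g : G true, g ∉ Set.range (i true) →
      ((ρ true g : GL (Fin d) F) : Matrix (Fin d) (Fin d) F)
        ⟨d - 1, by omega⟩ ⟨0, by omega⟩ ≠ 0)
    (htopright : ∀ g : G false, g ∉ Set.range (i false) →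
      ((ρ false g : GL (Fin d) F) : Matrix (Fin d) (Fin d) F)
        ⟨0, by omega⟩ ⟨d - 1, by omega⟩ ≠ 0) :
    ∃ ψ : Monoid.PushoutI i →* GL (Fin d) (RatFunc F), Function.Injective ψ := by
  exact shalen_amalgam_embeds_in_GL_ratFunc_general i ρ ((ρ true).comp (i true))
    (Bool.forall_bool.2 ⟨MonoidHom.ext fun h => (hagree h).symm, rfl⟩) hdiag true (hρ true)
    (fun b => if b then ⟨d - 1, by omega⟩ else ⟨0, by omega⟩)
    (Bool.injective_iff.2 (Fin.ne_of_val_ne (show 0 ≠ d - 1 by omega)))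
    (by rintro (_ | _) (_ | _) hij
        exacts [absurd rfl hij, htopright, hbotleft, absurd rfl hij])
end

section
/- Let B₃ be the braid group on three strands, with presentation ⟨x, y | x² = y³⟩. For every p equal to zero or a prime, there exist a field F of characteristic p and an injective group homomorphism from B₃ into GL(2,F). Since B₃ is nonabelian, the minimal dimension of a faithful linear representation of B₃ over fields of characteristic p equals 2 for every such p. -/
open scoped MatrixGroups

/-- The single defining relator `x² y⁻³` of the braid group
`B₃ = ⟨x, y | x² = y³⟩` (generators `0 ↦ x`, `1 ↦ y`). -/
def braid3Rels : Set (FreeGroup (Fin 2)) :=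
  {FreeGroup.of (0 : Fin 2) ^ 2 * (FreeGroup.of (1 : Fin 2) ^ 3)⁻¹}

/-- The braid group on three strands, `B₃ = ⟨x, y | x² = y³⟩`. -/
abbrev BraidGroup3 : Type := PresentedGroup braid3Rels

/-!
Write `z = x² = y³`, a central element of `B₃`. Over a field with an element `t` of valuation
`v t > 1`, let `x` and `y` act on the projective line by `u ↦ 1 / (t u)` and `u ↦ 1 / (1 - u)`.
By the ultrametric inequality `y` maps the open unit disc into its complement, and so does `y²`,
because `y³` acts trivially; while `x` maps the complement into the disc. By the ping-pong lemma
`B₃ / ⟨z⟩`, being generated by an element of order two and one of order three, acts faithfully.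
Lifting the two maps to matrices with `x² = y³ = t³` makes `z` act as a scalar of infinite order,
so that no nontrivial power of `z` is lost either.
-/

open Function Matrix Set
open scoped Cardinal Pointwise

section PingPong

variable {ι G P α : Type*} [Group G] [Group P] [MulAction P α] {X : ι → Set α}

theorem injective_of_ping_pong [Nontrivial ι] {H : ι → Subgroup G} (hH : ⨆ i, H i = ⊤)
    (hcard : 3 ≤ #ι ∨ ∃ i, 3 ≤ #(H i)) (φ : G →* P) (hX : ∀ i, (X i).Nonempty)
    (hdisj : Pairwise (Disjoint on X))
    (hpp : Pairwise fun i j => ∀ h ∈ H i, h ≠ 1 → φ h • X j ⊆ X i) : Injective φ := by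
  have hsurj : Surjective (Monoid.CoprodI.lift fun i => (H i).subtype) := by
    rw [← MonoidHom.range_eq_top, Monoid.CoprodI.range_eq_iSup]
    simpa only [Subgroup.range_subtype] using hH
  have hcomp : Monoid.CoprodI.lift (fun i => φ.comp (H i).subtype) =
      φ.comp (Monoid.CoprodI.lift fun i => (H i).subtype) := by
    ext; simp
  have hinj : Injective (Monoid.CoprodI.lift fun i => φ.comp (H i).subtype) :=
    Monoid.CoprodI.lift_injective_of_ping_pong _ hcard X hX hdisj fun i j hij h hne =>
      hpp hij h h.2 (by simpa using hne)
  rw [hcomp, MonoidHom.coe_comp] at hinj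
  exact hinj.of_comp_right hsurj

variable {x : ι → G} {n : ι → ℕ} {z : G}

theorem mem_center_of_forall_pow_eq (hgen : Subgroup.closure (range x) = ⊤)
    (hpow : ∀ i, x i ^ n i = z) : z ∈ Subgroup.center G := by
  rw [← Subgroup.centralizer_univ, ← Subgroup.coe_top, ← hgen, Subgroup.centralizer_closure,
    Subgroup.mem_centralizer_iff]
  rintro _ ⟨i, rfl⟩
  rw [← hpow i, ← pow_succ, ← pow_succ']

theorem orderOf_eq_of_ping_pong [Nontrivial ι] {a : ι → P} (hn : ∀ i, 0 < n i)
    (ha : ∀ i, a i ^ n i = 1) (hX : ∀ i, (X i).Nonempty) (hdisj : Pairwise (Disjoint on X))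
    (hpp : Pairwise fun i j => ∀ k, 0 < k → k < n i → a i ^ k • X j ⊆ X i) (i : ι) :
    orderOf (a i) = n i := by
  refine (orderOf_eq_iff (hn i)).2 ⟨ha i, fun k hk hk0 h1 => ?_⟩
  obtain ⟨j, hji⟩ := exists_ne i
  have hsub : X j ⊆ X i := by simpa [h1] using hpp hji.symm k hk0 hk
  exact (hX j).ne_empty (disjoint_self.1 ((hdisj hji).mono_right hsub))

theorem injective_of_ping_pong_of_pow_eq_one [Nontrivial ι]
    (hgen : Subgroup.closure (range x) = ⊤) (hn : ∀ i, 0 < n i) (hcard : ∃ i, 3 ≤ n i)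
    (hpow : ∀ i, x i ^ n i = 1) (φ : G →* P) (hX : ∀ i, (X i).Nonempty)
    (hdisj : Pairwise (Disjoint on X))
    (hpp : Pairwise fun i j => ∀ k, 0 < k → k < n i → φ (x i) ^ k • X j ⊆ X i) :
    Injective φ := by
  have hφ_order (i : ι) : orderOf (φ (x i)) = n i :=
    orderOf_eq_of_ping_pong (a := fun i => φ (x i)) hn
      (fun i => by rw [← map_pow, hpow, map_one]) hX hdisj hpp i
  have horder (i : ι) : orderOf (x i) = n i :=
    (orderOf_dvd_of_pow_eq_one (hpow i)).antisymm (hφ_order i ▸ orderOf_map_dvd φ (x i))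
  refine injective_of_ping_pong (H := fun i => Subgroup.zpowers (x i)) ?_ (.inr ?_) φ hX hdisj ?_
  · simp_rw [Subgroup.zpowers_eq_closure, ← Subgroup.closure_iUnion, iUnion_singleton_eq_range,
      hgen]
  · obtain ⟨i, hi⟩ := hcard
    have hNat : Nat.card (Subgroup.zpowers (x i)) = n i := by rw [Nat.card_zpowers, horder]
    have := Nat.finite_of_card_ne_zero (hNat.trans_ne (hn i).ne')
    refine ⟨i, ?_⟩
    rw [← Nat.cast_card, hNat]
    exact_mod_cast hi
  · classical
    rintro i j hij h hh hne
    have hfin : IsOfFinOrder (x i) := orderOf_pos_iff.1 (horder i ▸ hn i)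
    obtain ⟨k, hk, rfl⟩ := Finset.mem_image.1 (hfin.mem_zpowers_iff_mem_range_orderOf.1 hh)
    rw [Finset.mem_range, horder] at hk
    have hk0 : 0 < k := Nat.pos_of_ne_zero fun h0 => hne (by rw [h0, pow_zero])
    rw [map_pow]
    exact hpp hij k hk0 hk

theorem ker_eq_zpowers_of_ping_pong [Nontrivial ι] (hgen : Subgroup.closure (range x) = ⊤)
    (hn : ∀ i, 0 < n i) (hcard : ∃ i, 3 ≤ n i) (hpow : ∀ i, x i ^ n i = z)
    (φ : G →* P) (hz : φ z = 1) (hX : ∀ i, (X i).Nonempty) (hdisj : Pairwise (Disjoint on X))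
    (hpp : Pairwise fun i j => ∀ k, 0 < k → k < n i → φ (x i) ^ k • X j ⊆ X i) :
    φ.ker = Subgroup.zpowers z := by
  have hcentral := mem_center_of_forall_pow_eq hgen hpow
  have : (Subgroup.zpowers z).Normal := ⟨fun g hg a => by
    rwa [Subgroup.mem_center_iff.1 (Subgroup.zpowers_le.2 hcentral hg) a, mul_inv_cancel_right]⟩
  have hle : Subgroup.zpowers z ≤ φ.ker := Subgroup.zpowers_le.2 hz
  let π := QuotientGroup.mk' (Subgroup.zpowers z)
  have hπ_gen : Subgroup.closure (range (π ∘ x)) = ⊤ := by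
    rw [range_comp, ← MonoidHom.map_closure, hgen]
    exact Subgroup.map_top_of_surjective π (QuotientGroup.mk'_surjective _)
  have hπ_pow (i : ι) : π (x i) ^ n i = 1 := by
    rw [← map_pow, hpow]
    exact (QuotientGroup.eq_one_iff z).2 (Subgroup.mem_zpowers z)
  have hinj : Injective (QuotientGroup.lift _ φ hle) :=
    injective_of_ping_pong_of_pow_eq_one hπ_gen hn hcard hπ_pow _ hX hdisj hpp
  refine le_antisymm (fun g hg => (QuotientGroup.eq_one_iff g).1 (hinj ?_)) hle
  rw [map_one]
  exact hg

end PingPong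

namespace BraidGroup3

/-- The generator `x` of `⟨x, y | x² = y³⟩`. -/
abbrev x : BraidGroup3 := PresentedGroup.of 0

/-- The generator `y` of `⟨x, y | x² = y³⟩`. -/
abbrev y : BraidGroup3 := PresentedGroup.of 1

theorem x_sq_eq_y_cube : x ^ 2 = y ^ 3 :=
  PresentedGroup.mk_eq_mk_of_mul_inv_mem rfl

section Lift

variable {H : Type*} [Group H] {a b : H}

/-- The universal property of `⟨x, y | x² = y³⟩`: the homomorphism with `x ↦ a` and `y ↦ b`. -/
def lift (h : a ^ 2 = b ^ 3) : BraidGroup3 →* H :=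
  PresentedGroup.toGroup (f := ![a, b]) (by rintro _ rfl; simp [h])

@[simp]
theorem lift_x (h : a ^ 2 = b ^ 3) : lift h x = a :=
  PresentedGroup.toGroup.of _

@[simp]
theorem lift_y (h : a ^ 2 = b ^ 3) : lift h y = b :=
  PresentedGroup.toGroup.of _

end Lift

theorem not_commute_x_y : ¬ Commute x y := by
  have hrel : Equiv.swap (0 : Fin 3) 1 ^ 2 = finRotate 3 ^ 3 := by decide
  intro h
  have hcomm := h.map (lift hrel)
  rw [lift_x, lift_y, commute_iff_eq] at hcomm
  revert hcomm
  decide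

theorem ker_eq_zpowers_x_sq {P α : Type*} [Group P] [MulAction P α] {S : Set α}
    (hS : S.Nonempty) (φ : BraidGroup3 →* P) (hz : φ (x ^ 2) = 1)
    (hx : ∀ u ∉ S, φ x • u ∈ S) (hy : ∀ u ∈ S, φ y • u ∉ S) :
    φ.ker = Subgroup.zpowers (x ^ 2) := by
  have hy2 : ∀ u ∈ S, φ y ^ 2 • u ∉ S := fun u hu hmem => by
    have hy3 : φ y • φ y ^ 2 • u = u := by
      rw [smul_smul, ← pow_succ', ← map_pow, ← x_sq_eq_y_cube, hz, one_smul]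
    exact hy _ hmem (by rwa [hy3])
  have hSc : Sᶜ.Nonempty := hS.elim fun u hu => ⟨φ y • u, hy u hu⟩
  have hx_pow (k : ℕ) (h0 : 0 < k) (h2 : k < 2) : φ x ^ k • Sᶜ ⊆ S := by
    obtain rfl : k = 1 := by lia
    rw [pow_one, smul_set_subset_iff]
    exact hx
  have hy_pow (k : ℕ) (h0 : 0 < k) (h3 : k < 3) : φ y ^ k • S ⊆ Sᶜ := by
    rw [smul_set_subset_iff]
    obtain rfl | rfl : k = 1 ∨ k = 2 := by lia
    · rw [pow_one]
      exact hy
    · exact hy2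
  refine ker_eq_zpowers_of_ping_pong (x := PresentedGroup.of) (n := ![2, 3])
    (X := ![S, Sᶜ]) (PresentedGroup.closure_range_of _) ?_ ⟨1, le_rfl⟩ ?_ φ hz ?_ ?_ ?_
  · simp [Fin.forall_fin_two]
  · simp [Fin.forall_fin_two, x_sq_eq_y_cube]
  · simp [Fin.forall_fin_two, hS, hSc]
  · simp [Pairwise, Fin.forall_fin_two, onFun, disjoint_compl_right, disjoint_compl_left]
  · rintro i j hij
    fin_cases i <;> fin_cases j
    exacts [absurd rfl hij, hx_pow, hy_pow, absurd rfl hij]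

section LinearRepresentation

variable {R : Type*} [CommRing R]

/-- The image of `x` under the representation `toGL t`: a lift of the involution `u ↦ 1 / (t u)` of
the projective line, scaled so that its square is `t³`. -/
noncomputable def xGL (t : Rˣ) : GL (Fin 2) R :=
  GeneralLinearGroup.mk'' !![0, t; t ^ 2, 0] (by simp [det_fin_two])

/-- The image of `y` under the representation `toGL t`: a lift of the order-three map
`u ↦ 1 / (1 - u)` of the projective line, scaled so that its cube is `t³`. -/
noncomputable def yGL (t : Rˣ) : GL (Fin 2) R :=
  GeneralLinearGroup.mk'' !![0, -t; t, -t] (by simp [det_fin_two])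

theorem xGL_sq_eq_scalar (t : Rˣ) : xGL t ^ 2 = GeneralLinearGroup.scalar (Fin 2) (t ^ 3) := by
  ext i j
  fin_cases i <;> fin_cases j <;> simp [xGL, pow_succ, mul_apply, mul_assoc]

theorem yGL_cube_eq_scalar (t : Rˣ) : yGL t ^ 3 = GeneralLinearGroup.scalar (Fin 2) (t ^ 3) := by
  ext i j
  fin_cases i <;> fin_cases j <;> simp [yGL, pow_succ, mul_apply]

/-- The two-dimensional representation of `B₃` over `R` with parameter `t`, in which `x² = y³` acts
as the scalar `t³`. -/
noncomputable def toGL (t : Rˣ) : BraidGroup3 →* GL (Fin 2) R :=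
  lift ((xGL_sq_eq_scalar t).trans (yGL_cube_eq_scalar t).symm)

@[simp]
theorem toGL_x (t : Rˣ) : toGL t x = xGL t :=
  lift_x _

@[simp]
theorem toGL_y (t : Rˣ) : toGL t y = yGL t :=
  lift_y _

theorem toGL_x_sq (t : Rˣ) : toGL t (x ^ 2) = GeneralLinearGroup.scalar (Fin 2) (t ^ 3) := by
  rw [map_pow, toGL_x, xGL_sq_eq_scalar]

end LinearRepresentation

section ProjectiveLine

variable {F Γ₀ : Type*} [Field F] [LinearOrderedCommGroupWithZero Γ₀]
  (v : Valuation F Γ₀) {t : Fˣ}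

/-- The open unit disc of a valued field, as a subset of the projective line `F ∪ {∞}`; it and its
complement are the two ping-pong sets. -/
def unitDisc : Set (OnePoint F) :=
  (↑) '' {u : F | v u < 1}

theorem coe_mem_unitDisc {u : F} : (u : OnePoint F) ∈ unitDisc v ↔ v u < 1 :=
  OnePoint.coe_injective.mem_set_image

section MoebiusAction

variable [DecidableEq F]

theorem scalar_smul_onePoint (c : Fˣ) (u : OnePoint F) :
    GeneralLinearGroup.scalar (Fin 2) c • u = u := by
  cases u with
  | infty => simp [OnePoint.smul_infty_eq_ite]
  | coe u => simp [OnePoint.smul_some_eq_ite]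

theorem xGL_smul_infty : xGL t • OnePoint.infty = ((0 : F) : OnePoint F) := by
  simp [OnePoint.smul_infty_eq_ite, xGL]

theorem xGL_smul_coe {u : F} (hu : u ≠ 0) :
    xGL t • (u : OnePoint F) = ((t * u : F)⁻¹ : F) := by
  have : (t : F) / (t ^ 2 * u) = (t * u)⁻¹ := by field_simp
  simp [OnePoint.smul_some_eq_ite, xGL, hu, this]

theorem yGL_smul_coe {u : F} (hu : u ≠ 1) :
    yGL t • (u : OnePoint F) = ((1 - u)⁻¹ : F) := by
  have hsub : u - 1 ≠ 0 := sub_ne_zero.2 hu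
  have hdenom : (t : F) * u - t = t * (u - 1) := by ring
  have hvalue : -(t : F) / (t * (u - 1)) = (1 - u)⁻¹ := by grind [t.ne_zero]
  simp [OnePoint.smul_some_eq_ite, yGL, ← sub_eq_add_neg, hdenom, hsub, hvalue]

theorem xGL_smul_mem_unitDisc (ht : 1 < v t) {u : OnePoint F} (hu : u ∉ unitDisc v) :
    xGL t • u ∈ unitDisc v := by
  cases u with
  | infty => simp [xGL_smul_infty, coe_mem_unitDisc]
  | coe u =>
    rw [coe_mem_unitDisc, not_lt] at hu
    have hu0 : u ≠ 0 := v.ne_zero_iff.1 (zero_lt_one.trans_le hu).ne'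
    rw [xGL_smul_coe hu0, coe_mem_unitDisc, map_inv₀, map_mul]
    exact inv_lt_one_of_one_lt₀ (one_lt_mul_of_lt_of_le' ht hu)

theorem yGL_smul_notMem_unitDisc {u : OnePoint F} (hu : u ∈ unitDisc v) :
    yGL t • u ∉ unitDisc v := by
  obtain ⟨u, hu, rfl⟩ := hu
  have hu1 : u ≠ 1 := by rintro rfl; simp at hu
  simp [yGL_smul_coe hu1, coe_mem_unitDisc, v.map_one_sub_of_lt hu]

theorem ker_toPermHom_comp_toGL (ht : 1 < v t) :
    ((MulAction.toPermHom (GL (Fin 2) F) (OnePoint F)).comp (toGL t)).ker =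
      Subgroup.zpowers (x ^ 2) := by
  have hne : (unitDisc v).Nonempty := ⟨_, (coe_mem_unitDisc v (u := 0)).2 (by simp)⟩
  refine ker_eq_zpowers_x_sq hne _ ?_ ?_ ?_
  · ext u : 1
    rw [MonoidHom.comp_apply, toGL_x_sq, MulAction.toPermHom_apply, MulAction.toPerm_apply,
      scalar_smul_onePoint, Equiv.Perm.one_apply]
  · simpa using fun u => xGL_smul_mem_unitDisc v ht
  · simpa using fun u => yGL_smul_notMem_unitDisc v

end MoebiusAction

theorem toGL_injective (ht : 1 < v t) : Injective (toGL t) := by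
  classical
  rw [injective_iff_map_eq_one]
  intro g hg
  obtain ⟨k, rfl⟩ : ∃ k : ℤ, (x ^ 2) ^ k = g := by
    rw [← Subgroup.mem_zpowers_iff, ← ker_toPermHom_comp_toGL v ht, MonoidHom.mem_ker,
      MonoidHom.comp_apply, hg, map_one]
  rw [map_zpow, toGL_x_sq, ← map_zpow] at hg
  have hscalar : Injective (GeneralLinearGroup.scalar (Fin 2) : Fˣ →* GL (Fin 2) F) :=
    Units.map_injective fun _ _ => scalar_inj.1
  have htk : ((t : F) ^ 3) ^ k = 1 := by
    simpa using congrArg Units.val ((map_eq_one_iff _ hscalar).1 hg)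
  have hvk : (v t ^ 3) ^ k = 1 := by rw [← map_pow, ← map_zpow₀, htk, map_one]
  rw [zpow_eq_one_iff_right₀ zero_le (one_lt_pow₀ ht three_ne_zero).ne'] at hvk
  rw [hvk, zpow_zero]

end ProjectiveLine

theorem exists_injective_GL_two {F Γ₀ : Type*} [Field F] [LinearOrderedCommGroupWithZero Γ₀]
    (v : Valuation F Γ₀) [v.IsNontrivial] :
    ∃ ρ : BraidGroup3 →* GL (Fin 2) F, Injective ρ := by
  obtain ⟨t, ht⟩ := Valuation.IsNontrivial.exists_one_lt (v := v)
  have ht0 : t ≠ 0 := v.ne_zero_iff.1 (zero_lt_one.trans ht).ne'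
  exact ⟨toGL (Units.mk0 t ht0), toGL_injective v ht⟩

theorem not_injective_GL_of_unique {n R : Type*} [Unique n] [DecidableEq n] [Fintype n]
    [CommSemiring R] (ρ : BraidGroup3 →* GL n R) : ¬ Injective ρ := by
  intro hρ
  refine not_commute_x_y (hρ ?_)
  rw [map_mul, map_mul]
  ext i j
  rw [Subsingleton.elim i j]
  simp [mul_apply, Unique.eq_default, mul_comm]

end BraidGroup3

/-- For every `p` equal to zero or a prime, the braid group
`B₃` embeds in `GL(2,F)` for some field `F` of characteristic `p`; moreover it
embeds in `GL(1,F')` for no field `F'` (it is nonabelian), so `m_p(B₃) = 2`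
for every such `p`. -/
theorem braid3_min_faithful_dimension_eq_two
    (p : ℕ) (hp : p = 0 ∨ p.Prime) :
    (∃ (F : Type) (_ : Field F), CharP F p ∧
      ∃ ρ : BraidGroup3 →* GL (Fin 2) F, Function.Injective ρ) ∧
    (∀ (F' : Type) [Field F'],
      ¬ ∃ ρ : BraidGroup3 →* GL (Fin 1) F', Function.Injective ρ) := by
  refine ⟨?_, fun F' _ ⟨ρ, hρ⟩ => BraidGroup3.not_injective_GL_of_unique ρ hρ⟩
  obtain ⟨K, _, _⟩ : ∃ (K : Type) (_ : Field K), CharP K p := by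
    rcases hp with rfl | hp
    · exact ⟨ℚ, inferInstance, inferInstance⟩
    · have : Fact p.Prime := ⟨hp⟩
      exact ⟨ZMod p, inferInstance, inferInstance⟩
  classical
  exact ⟨RatFunc K, inferInstance, inferInstance,
    BraidGroup3.exists_injective_GL_two (RatFunc.inftyValuation K)⟩
end
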